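/- arXiv:0910.2960 — 2 statements merged into one kernel-verified Lean document; each statement's English description precedes it below -/
import Mathlib

section
/- Assume that the Hardy–Littlewood prime pair conjecture holds uniformly for 2 ≤ d ≤ (log x)²; i.e., for every ε > 0 there exists x₀ such that for all x ≥ x₀ and all even integers d with 2 ≤ d ≤ (log x)² one has |π₂(x,d) − 𝔖(d)·x/(log x)²| ≤ ε·𝔖(d)·x/(log x)². Then for every prime p there exists X such that for all x ≥ X, every jumping champion d* for x is divisible by p. -/
open Filter Real

/-- The `n`-th prime, 1-indexed: `nthPrime 1 = 2`, `nthPrime 2 = 3`, ... -/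
noncomputable def nthPrime (n : ℕ) : ℕ := Nat.nth Nat.Prime (n - 1)

/-- `N x d` is the number of indices `n ≥ 2` with `pₙ ≤ x` and `pₙ - pₙ₋₁ = d`. -/
noncomputable def N (x : ℝ) (d : ℕ) : ℕ :=
  Set.ncard {n : ℕ | 2 ≤ n ∧ (nthPrime n : ℝ) ≤ x ∧ nthPrime n - nthPrime (n - 1) = d}

/-- `N* x`, the maximal number of occurrences of any gap among consecutive primes up to `x`. -/
noncomputable def Nstar (x : ℝ) : ℕ := sSup (Set.range fun d => N x d)

/-- A positive integer `d` is a jumping champion for `x` if `N x d` attains `max_d N x d`. -/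
def JumpingChampion (x : ℝ) (d : ℕ) : Prop := 0 < d ∧ ∀ e : ℕ, N x e ≤ N x d

/-- `pi2 x d` counts primes `q ≤ x` such that `q - d` is also prime. -/
noncomputable def pi2 (x : ℝ) (d : ℕ) : ℕ :=
  Set.ncard {q : ℕ | q.Prime ∧ (q : ℝ) ≤ x ∧ (q - d).Prime}

/-- `pi3 x d d'` counts primes `q ≤ x` such that `q - d` and `q - d'` are both prime. -/
noncomputable def pi3 (x : ℝ) (d d' : ℕ) : ℕ :=
  Set.ncard {q : ℕ | q.Prime ∧ (q : ℝ) ≤ x ∧ (q - d).Prime ∧ (q - d').Prime}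

/-- The twin prime constant `C₂ = ∏_{p > 2} (1 - 1/(p-1)²)`. -/
noncomputable def C2 : ℝ := ∏' q : {q : ℕ // q.Prime ∧ 2 < q}, (1 - 1 / ((q : ℕ) - 1 : ℝ) ^ 2)

/-- The singular series `𝔖(d)`. -/
noncomputable def singularSeries (d : ℕ) : ℝ :=
  if Even d then
    2 * C2 * ∏ q ∈ d.primeFactors.filter (fun q => 2 < q), ((q : ℝ) - 1) / ((q : ℝ) - 2)
  else 0

/-- `nu d' d q` is the number of distinct residue classes mod `q` occupied by `{0, d', d}`. -/
def nu (d' d : ℕ) (q : ℕ) : ℕ :=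
  ({(0 : ZMod q), (d' : ZMod q), (d : ZMod q)} : Finset (ZMod q)).card

/-- The singular series of the triple `{0, d', d}`. -/
noncomputable def tripleSingularSeries (d' d : ℕ) : ℝ :=
  ∏' q : Nat.Primes, ((1 - 1 / ((q : ℕ) : ℝ)) ^ 3)⁻¹ * (1 - (nu d' d q : ℝ) / ((q : ℕ) : ℝ))

/-- The `k`-th primorial, the product of the first `k` primes. -/
noncomputable def primorialN (k : ℕ) : ℕ := ∏ i ∈ Finset.range k, Nat.nth Nat.Prime i

/-- The index `n` of the largest primorial `𝒫ₙ ≤ y`. -/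
noncomputable def primorialFloorIndex (y : ℝ) : ℕ := sSup {n : ℕ | (primorialN n : ℝ) ≤ y}

/-- Chebyshev's theta function `ϑ(t) = ∑_{p ≤ t} log p`. -/
noncomputable def theta (t : ℝ) : ℝ :=
  ∑ q ∈ (Finset.range (⌊t⌋₊ + 1)).filter Nat.Prime, Real.log q


lemma crt_sum (m k : ℕ) (hc : m.Coprime k) (hm : 0 < m) (hk : 0 < k) (u v : ℕ → ℝ)
    (hu : ∀ n, u (n % m) = u n) (hv : ∀ n, v (n % k) = v n) :
    ∑ n ∈ Finset.range (m * k), u n * v n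
      = (∑ n ∈ Finset.range m, u n) * (∑ n ∈ Finset.range k, v n) := by
  rw [Finset.sum_mul_sum, ← Finset.sum_product']
  have hmaps : Set.MapsTo (fun n : ℕ => (n % m, n % k)) (Finset.range (m * k) : Set ℕ)
      ((Finset.range m ×ˢ Finset.range k : Finset (ℕ × ℕ)) : Set (ℕ × ℕ)) := by
    intro n _
    simp [Nat.mod_lt _ hm, Nat.mod_lt _ hk]
  have hinj : Set.InjOn (fun n : ℕ => (n % m, n % k)) (Finset.range (m * k) : Set ℕ) := by
    intro a ha b hb hab
    simp only [Prod.mk.injEq] at hab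
    have h1 : a ≡ b [MOD m * k] := (Nat.modEq_and_modEq_iff_modEq_mul hc).1 ⟨hab.1, hab.2⟩
    simp only [Finset.coe_range, Set.mem_Iio] at ha hb
    exact Nat.ModEq.eq_of_lt_of_lt h1 ha hb
  refine Finset.sum_nbij (fun n : ℕ => (n % m, n % k)) hmaps hinj ?_ ?_
  · exact Finset.surjOn_of_injOn_of_card_le _ hmaps hinj (by simp)
  · intro n _
    simp [hu, hv]

lemma crt_prod_sum (s : Finset ℕ) (F : ℕ → ℕ → ℝ) (hs : ∀ p ∈ s, p.Prime)
    (hF : ∀ p ∈ s, ∀ n, F p (n % p) = F p n) :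
    ∑ n ∈ Finset.range (∏ p ∈ s, p), ∏ p ∈ s, F p n = ∏ p ∈ s, ∑ n ∈ Finset.range p, F p n := by
  induction s using Finset.induction_on with
  | empty => simp
  | insert a s ha ih =>
    have ih' := ih (fun p hp => hs p (Finset.mem_insert_of_mem hp))
      (fun p hp => hF p (Finset.mem_insert_of_mem hp))
    simp only [Finset.prod_insert ha]
    rw [← ih']
    apply crt_sum
    · apply Nat.Coprime.prod_right
      intro p hp
      refine (Nat.coprime_primes (hs a (Finset.mem_insert_self _ _))
        (hs p (Finset.mem_insert_of_mem hp))).2 ?_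
      rintro rfl
      exact ha hp
    · exact (hs a (Finset.mem_insert_self _ _)).pos
    · exact Finset.prod_pos fun p hp => (hs p (Finset.mem_insert_of_mem hp)).pos
    · exact hF a (Finset.mem_insert_self _ _)
    · intro n
      refine Finset.prod_congr rfl fun p hp => ?_
      rw [← hF p (Finset.mem_insert_of_mem hp), ← hF p (Finset.mem_insert_of_mem hp) n,
        Nat.mod_mod_of_dvd _ (Finset.dvd_prod_of_mem _ hp)]

lemma periodic_sum (M K : ℕ) (hM : 0 < M) (F : ℕ → ℝ) (hF : ∀ n, F (n + M) = F n)
    (hb : ∀ n, |F n| ≤ 1) :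
    ∑ n ∈ Finset.range K, F n ≤ ((K / M : ℕ) : ℝ) * ∑ n ∈ Finset.range M, F n + M := by
  have hmul : ∀ k n, F (M * k + n) = F n := by
    intro k
    induction k with
    | zero => simp
    | succ k ih =>
      intro n
      rw [← ih n, ← hF (M * k + n)]
      congr 1; ring
  have h1 : ∀ k : ℕ, ∑ n ∈ Finset.range (M * k), F n = (k : ℝ) * ∑ n ∈ Finset.range M, F n := by
    intro k
    induction k with
    | zero => simp
    | succ k ih =>
      rw [Nat.mul_succ, Finset.sum_range_add, ih]
      simp only [hmul]
      push_cast; ring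
  conv_lhs => rw [← Nat.div_add_mod K M, Finset.sum_range_add, h1]
  have h2 : ∑ n ∈ Finset.range (K % M), F (M * (K / M) + n) ≤ M := by
    calc ∑ n ∈ Finset.range (K % M), F (M * (K / M) + n) ≤ ∑ n ∈ Finset.range (K % M), (1 : ℝ) :=
          Finset.sum_le_sum fun n _ => (le_abs_self _).trans (hb _)
      _ = ((K % M : ℕ) : ℝ) := by simp
      _ ≤ M := by exact_mod_cast (Nat.mod_lt _ hM).le
  linarith

/-- Sieve function: mean zero mod `p`. -/
noncomputable def sieveG (Bad : ℕ → ℕ → Prop) (p n : ℕ) : ℝ := by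
  classical exact if Bad p n then -1 else 3 / ((p : ℝ) - 3)

lemma sieveG_abs (Bad : ℕ → ℕ → Prop) (p n : ℕ) (hp : 7 ≤ p) : |sieveG Bad p n| ≤ 1 := by
  have h : (7 : ℝ) ≤ p := by exact_mod_cast hp
  unfold sieveG
  split_ifs
  · simp
  · rw [abs_of_nonneg (div_nonneg (by norm_num) (by linarith)), div_le_one (by linarith)]
    linarith

lemma sieveG_sum (Bad : ℕ → ℕ → Prop) (p : ℕ) (hp : 7 ≤ p)
    (hw : {n ∈ (Finset.range p : Set ℕ) | Bad p n}.ncard = 3) :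
    ∑ n ∈ Finset.range p, sieveG Bad p n = 0 ∧
    ∑ n ∈ Finset.range p, sieveG Bad p n * sieveG Bad p n = p * (3 / ((p : ℝ) - 3)) := by
  classical
  have h : (7 : ℝ) ≤ p := by exact_mod_cast hp
  have h3 : (p : ℝ) - 3 ≠ 0 := by intro h0; linarith
  have hc : ((Finset.range p).filter (fun n => Bad p n)).card = 3 := by
    rw [← hw, ← Set.ncard_coe_finset]
    congr 1; ext; simp
  have hc2 : (((Finset.range p).filter (fun n => ¬ Bad p n)).card : ℝ) = p - 3 := by
    have := Finset.card_filter_add_card_filter_not (s := Finset.range p) (fun n => Bad p n)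
    rw [hc, Finset.card_range] at this
    have h2 : ((3 + ((Finset.range p).filter (fun n => ¬ Bad p n)).card : ℕ) : ℝ) = p := by
      exact_mod_cast this
    push_cast at h2; linarith
  constructor
  · unfold sieveG
    rw [Finset.sum_ite, Finset.sum_const, Finset.sum_const, nsmul_eq_mul, nsmul_eq_mul, hc, hc2]
    field_simp; norm_num
  · have : ∀ n, sieveG Bad p n * sieveG Bad p n
        = if Bad p n then 1 else (3 / ((p : ℝ) - 3)) * (3 / ((p : ℝ) - 3)) := by
      intro n; unfold sieveG; split_ifs <;> ring
    simp only [this]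
    rw [Finset.sum_ite, Finset.sum_const, Finset.sum_const, nsmul_eq_mul, nsmul_eq_mul, hc, hc2]
    field_simp; push_cast; ring

lemma sieve_pair (Bad : ℕ → ℕ → Prop) (K : ℕ) (s t : Finset ℕ)
    (hs : ∀ p ∈ s ∪ t, p.Prime ∧ 7 ≤ p ∧ (∀ n, Bad p (n % p) ↔ Bad p n) ∧
      {n ∈ (Finset.range p : Set ℕ) | Bad p n}.ncard = 3) :
    ∑ n ∈ Finset.range K, (∏ p ∈ s, sieveG Bad p n) * (∏ p ∈ t, sieveG Bad p n)
      ≤ (if s = t then K * ∏ p ∈ s, (3 / ((p : ℝ) - 3)) else 0)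
        + ((∏ p ∈ s, p : ℕ) : ℝ) * ((∏ p ∈ t, p : ℕ) : ℝ) := by
  classical
  set g := sieveG Bad with hg
  let G : ℕ → ℕ → ℝ := fun p n => (if p ∈ s then g p n else 1) * (if p ∈ t then g p n else 1)
  have hG : ∀ n, (∏ p ∈ s, g p n) * (∏ p ∈ t, g p n) = ∏ p ∈ s ∪ t, G p n := by
    intro n
    simp only [G, Finset.prod_mul_distrib, Finset.prod_ite_mem, Finset.union_inter_cancel_left,
      Finset.union_inter_cancel_right]
  have hmod : ∀ p ∈ s ∪ t, ∀ n, g p (n % p) = g p n := by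
    intro p hp n
    simp only [hg, sieveG, (hs p hp).2.2.1 n]
  have hGmod : ∀ p ∈ s ∪ t, ∀ n, G p (n % p) = G p n := by
    intro p hp n
    simp only [G, hmod p hp n]
  set M := ∏ p ∈ s ∪ t, p with hM
  have hMpos : 0 < M := Finset.prod_pos fun p hp => (hs p hp).1.pos
  have hgle : ∀ p ∈ s ∪ t, ∀ n, |g p n| ≤ 1 := fun p hp n => sieveG_abs Bad p n (hs p hp).2.1
  have hGle : ∀ p ∈ s ∪ t, ∀ n, |G p n| ≤ 1 := by
    intro p hp n
    have := hgle p hp n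
    simp only [G, abs_mul]
    refine mul_le_one₀ ?_ (abs_nonneg _) ?_ <;> split_ifs <;> simp [this]
  have key := periodic_sum M K hMpos (fun n => ∏ p ∈ s ∪ t, G p n)
    (by
      intro n
      refine Finset.prod_congr rfl fun p hp => ?_
      rw [← hGmod p hp, ← hGmod p hp n]
      congr 1
      have : p ∣ M := Finset.dvd_prod_of_mem _ hp
      obtain ⟨c, hc⟩ := this
      rw [hc, Nat.add_mul_mod_self_left])
    (by
      intro n
      rw [Finset.abs_prod]
      exact Finset.prod_le_one (fun p _ => abs_nonneg _) (fun p hp => hGle p hp n))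
  simp only [hG]
  have hMle : (M : ℝ) ≤ ((∏ p ∈ s, p : ℕ) : ℝ) * ((∏ p ∈ t, p : ℕ) : ℝ) := by
    have h1 := Finset.prod_union_inter (s₁ := s) (s₂ := t) (f := fun p : ℕ => p)
    have h2 : 0 < ∏ p ∈ s ∩ t, p := Finset.prod_pos fun p hp =>
      (hs p (Finset.mem_union_left _ (Finset.mem_inter.1 hp).1)).1.pos
    have h3 : M ≤ (∏ p ∈ s, p) * (∏ p ∈ t, p) := by
      rw [← h1]; exact Nat.le_mul_of_pos_right _ h2
    exact_mod_cast h3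
  rw [crt_prod_sum (s ∪ t) G (fun p hp => (hs p hp).1) hGmod] at key
  refine key.trans (add_le_add ?_ hMle)
  split_ifs with hst
  · subst hst
    have : ∏ p ∈ s ∪ s, ∑ n ∈ Finset.range p, G p n = M * ∏ p ∈ s, (3 / ((p : ℝ) - 3)) := by
      rw [hM, Finset.union_self, Nat.cast_prod, ← Finset.prod_mul_distrib]
      refine Finset.prod_congr rfl fun p hp => ?_
      have h := hs p (Finset.mem_union_left _ hp)
      simp only [G, hp, if_true]
      exact (sieveG_sum Bad p h.2.1 h.2.2.2).2
    rw [this, ← mul_assoc]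
    refine mul_le_mul_of_nonneg_right ?_ ?_
    · exact_mod_cast Nat.div_mul_le_self K M
    · refine Finset.prod_nonneg fun p hp => ?_
      have h : (7 : ℝ) ≤ p := by exact_mod_cast (hs p (Finset.mem_union_left _ hp)).2.1
      exact div_nonneg (by norm_num) (by linarith)
  · have : ∃ p ∈ s ∪ t, ¬ (p ∈ s ↔ p ∈ t) := by
      by_contra! hcon
      apply hst
      ext p
      constructor
      · intro hp; exact (hcon p (Finset.mem_union_left _ hp)).1 hp
      · intro hp; exact (hcon p (Finset.mem_union_right _ hp)).2 hp
    obtain ⟨p, hp, hpn⟩ := this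
    have h := hs p hp
    have h0 := (sieveG_sum Bad p h.2.1 h.2.2.2).1
    rw [Finset.prod_eq_zero hp, mul_zero]
    rw [← h0]
    refine Finset.sum_congr rfl fun n _ => ?_
    simp only [G]
    by_cases h1 : p ∈ s <;> by_cases h2 : p ∈ t <;> simp [h1, h2, hg] at hpn ⊢

lemma sieve_main (Bad : ℕ → ℕ → Prop) (K : ℕ) (D : Finset (Finset ℕ))
    (hD : ∀ s ∈ D, ∀ p ∈ s, p.Prime ∧ 7 ≤ p ∧ (∀ n, Bad p (n % p) ↔ Bad p n) ∧
      {n ∈ (Finset.range p : Set ℕ) | Bad p n}.ncard = 3) (S : Finset ℕ)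
    (hS : ∀ n ∈ S, n < K ∧ ∀ s ∈ D, ∀ p ∈ s, ¬ Bad p n) :
    (S.card : ℝ) * (∑ s ∈ D, ∏ p ∈ s, (3 / ((p : ℝ) - 3))) ^ 2
      ≤ K * (∑ s ∈ D, ∏ p ∈ s, (3 / ((p : ℝ) - 3))) + (∑ s ∈ D, ((∏ p ∈ s, p : ℕ) : ℝ)) ^ 2 := by
  classical
  set g := sieveG Bad with hg
  set L := ∑ s ∈ D, ∏ p ∈ s, (3 / ((p : ℝ) - 3)) with hL
  have h1 : (S.card : ℝ) * L ^ 2 = ∑ n ∈ S, (∑ s ∈ D, ∏ p ∈ s, g p n) ^ 2 := by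
    rw [← nsmul_eq_mul, ← Finset.sum_const]
    refine Finset.sum_congr rfl fun n hn => ?_
    congr 1
    refine Finset.sum_congr rfl fun s hs => Finset.prod_congr rfl fun p hp => ?_
    simp [hg, sieveG, (hS n hn).2 s hs p hp]
  have h2 : ∑ n ∈ S, (∑ s ∈ D, ∏ p ∈ s, g p n) ^ 2
      ≤ ∑ n ∈ Finset.range K, (∑ s ∈ D, ∏ p ∈ s, g p n) ^ 2 :=
    Finset.sum_le_sum_of_subset_of_nonneg (fun n hn => Finset.mem_range.2 (hS n hn).1)
      (fun _ _ _ => sq_nonneg _)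
  have h3 : ∑ n ∈ Finset.range K, (∑ s ∈ D, ∏ p ∈ s, g p n) ^ 2
      = ∑ s ∈ D, ∑ t ∈ D, ∑ n ∈ Finset.range K, (∏ p ∈ s, g p n) * (∏ p ∈ t, g p n) := by
    simp only [sq, Finset.sum_mul_sum]
    rw [Finset.sum_comm]
    refine Finset.sum_congr rfl fun s _ => ?_
    rw [Finset.sum_comm]
  have h4 : ∑ s ∈ D, ∑ t ∈ D, ∑ n ∈ Finset.range K, (∏ p ∈ s, g p n) * (∏ p ∈ t, g p n)
      ≤ ∑ s ∈ D, ∑ t ∈ D, ((if s = t then K * ∏ p ∈ s, (3 / ((p : ℝ) - 3)) else 0)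
        + ((∏ p ∈ s, p : ℕ) : ℝ) * ((∏ p ∈ t, p : ℕ) : ℝ)) := by
    refine Finset.sum_le_sum fun s hs => Finset.sum_le_sum fun t ht => ?_
    refine sieve_pair Bad K s t fun p hp => ?_
    rcases Finset.mem_union.1 hp with h | h
    · exact hD s hs p h
    · exact hD t ht p h
  rw [h1]
  refine (h2.trans (h3.le.trans h4)).trans (le_of_eq ?_)
  simp only [Finset.sum_add_distrib]
  rw [sq, Finset.sum_mul_sum, hL, Finset.mul_sum]
  congr 1
  refine Finset.sum_congr rfl fun s hs => ?_
  simp [hs]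

open ArithmeticFunction in
/-- Completely multiplicative weight `3^Ω(n)/n` on integers coprime to `B`. -/
noncomputable def wtF (B : ℕ) : ℕ →* ℝ where
  toFun n := if n.Coprime B then (3 : ℝ) ^ (cardFactors n) / n else 0
  map_one' := by simp
  map_mul' m n := by
    by_cases hm : m = 0
    · subst hm; simp
    by_cases hn : n = 0
    · subst hn; simp
    rw [cardFactors_mul hm hn]
    simp only [Nat.coprime_mul_iff_left]
    by_cases h1 : m.Coprime B <;> by_cases h2 : n.Coprime B
    · rw [if_pos ⟨h1, h2⟩, if_pos h1, if_pos h2, pow_add, Nat.cast_mul, mul_div_mul_comm]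
    · rw [if_neg (fun h => h2 h.2), if_neg h2, mul_zero]
    · rw [if_neg (fun h => h1 h.1), if_neg h1, zero_mul]
    · rw [if_neg (fun h => h1 h.1), if_neg h1, zero_mul]

open ArithmeticFunction in
lemma wtF_apply (B n : ℕ) : wtF B n = if n.Coprime B then (3 : ℝ) ^ (cardFactors n) / n else 0 := rfl

lemma wtF_nonneg (B n : ℕ) : 0 ≤ wtF B n := by
  rw [wtF_apply]; split_ifs <;> positivity

lemma seven_le_of_coprime {p B : ℕ} (hp : p.Prime) (hB : 30 ∣ B) (hc : p.Coprime B) : 7 ≤ p := by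
  by_contra h
  have h1 : p.Coprime 30 := Nat.Coprime.coprime_dvd_right hB hc
  have h2 := hp.two_le
  interval_cases p <;> revert h1 hp <;> decide

lemma wtF_prime (B p : ℕ) (hp : p.Prime) (hc : p.Coprime B) : wtF B p = 3 / p := by
  rw [wtF_apply, if_pos hc, ArithmeticFunction.cardFactors_apply_prime hp, pow_one]

lemma wtF_fiber (B : ℕ) (hB : 30 ∣ B) (s T : Finset ℕ) (hsc : ∀ p ∈ s, p.Prime ∧ p.Coprime B)
    (hT : ∀ n ∈ T, n ≠ 0 ∧ n.primeFactors = s) :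
    ∑ n ∈ T, wtF B n ≤ ∏ p ∈ s, (3 / ((p : ℝ) - 3)) := by
  classical
  set P := ∏ p ∈ s, p with hP
  have hPpos : 0 < P := Finset.prod_pos fun p hp => (hsc p hp).1.pos
  have hlt : ∀ {p : ℕ}, p.Prime → ‖wtF B p‖ < 1 := by
    intro p hp
    rw [Real.norm_of_nonneg (wtF_nonneg _ _)]
    by_cases hc : p.Coprime B
    · rw [wtF_prime B p hp hc]
      have : (7 : ℝ) ≤ p := by exact_mod_cast seven_le_of_coprime hp hB hc
      rw [div_lt_one (by linarith)]; linarith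
    · rw [wtF_apply, if_neg hc]; norm_num
  have hsum := (EulerProduct.summable_and_hasSum_factoredNumbers_prod_filter_prime_geometric
    (f := wtF B) hlt s).2
  have hsum2 : HasSum (Set.indicator (Nat.factoredNumbers s) (fun n => wtF B n))
      (∏ p ∈ s with p.Prime, (1 - wtF B p)⁻¹) := by
    rw [← hasSum_subtype_iff_indicator]; exact hsum
  have hdvd : ∀ n ∈ T, P ∣ n := by
    intro n hn
    rw [hP, ← (hT n hn).2]
    exact Nat.prod_primeFactors_dvd n
  have h1 : ∑ n ∈ T, wtF B n = wtF B P * ∑ n ∈ T, wtF B (n / P) := by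
    rw [Finset.mul_sum]
    refine Finset.sum_congr rfl fun n hn => ?_
    rw [← map_mul, Nat.mul_div_cancel' (hdvd n hn)]
  have h2 : ∑ n ∈ T, wtF B (n / P) ≤ ∏ p ∈ s with p.Prime, (1 - wtF B p)⁻¹ := by
    have hinj : Set.InjOn (fun n => n / P) (T : Set ℕ) := by
      intro a ha b hb hab
      have := congrArg (fun k => P * k) hab
      simpa [Nat.mul_div_cancel' (hdvd a ha), Nat.mul_div_cancel' (hdvd b hb)] using this
    have h3 := sum_le_hasSum (T.image (fun n => n / P))
      (fun i _ => Set.indicator_nonneg (fun n _ => wtF_nonneg B n) i) hsum2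
    rw [Finset.sum_image hinj] at h3
    refine le_trans (le_of_eq ?_) h3
    refine Finset.sum_congr rfl fun n hn => ?_
    rw [Set.indicator_of_mem]
    have hn0 : n / P ≠ 0 := (Nat.div_pos (Nat.le_of_dvd (Nat.pos_of_ne_zero (hT n hn).1)
      (hdvd n hn)) hPpos).ne'
    refine Nat.mem_factoredNumbers_of_primeFactors_subset hn0 ?_
    rw [← (hT n hn).2]
    exact Nat.primeFactors_mono (Nat.div_dvd_of_dvd (hdvd n hn)) (hT n hn).1
  have hfil : s.filter Nat.Prime = s := Finset.filter_true_of_mem fun p hp => (hsc p hp).1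
  rw [hfil] at h2
  rw [h1]
  refine (mul_le_mul_of_nonneg_left h2 (wtF_nonneg _ _)).trans (le_of_eq ?_)
  rw [hP, map_prod, ← Finset.prod_mul_distrib]
  refine Finset.prod_congr rfl fun p hp => ?_
  rw [wtF_prime B p (hsc p hp).1 (hsc p hp).2]
  have : (7 : ℝ) ≤ p := by
    exact_mod_cast seven_le_of_coprime (hsc p hp).1 hB (hsc p hp).2
  have h3 : (p : ℝ) - 3 ≠ 0 := by intro h0; linarith
  have h4 : (p : ℝ) ≠ 0 := by intro h0; linarith
  have h5 : (1 - 3 / (p : ℝ)) = (p - 3) / p := by field_simp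
  rw [h5]; field_simp

/-- Integers in `[1,Y]` coprime to `B`. -/
def copSet (B Y : ℕ) : Finset ℕ := (Finset.Icc 1 Y).filter (fun n => n.Coprime B)

open ArithmeticFunction Pointwise in
lemma sum_div_pow_cardFactors (k n : ℕ) (hn : n ≠ 0) :
    ∑ a ∈ n.divisors, k ^ cardFactors a ≤ (k + 1) ^ cardFactors n := by
  induction n using Nat.recOnMul with
  | zero => exact absurd rfl hn
  | one => simp
  | prime p hp =>
    rw [hp.divisors, Finset.sum_pair hp.one_lt.ne, cardFactors_apply_prime hp]
    simp [add_comm]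
  | mul a b iha ihb =>
    have ha : a ≠ 0 := left_ne_zero_of_mul hn
    have hb : b ≠ 0 := right_ne_zero_of_mul hn
    rw [cardFactors_mul ha hb, pow_add]
    refine le_trans ?_ (Nat.mul_le_mul (iha ha) (ihb hb))
    rw [Nat.divisors_mul, Finset.sum_mul_sum, ← Finset.sum_product']
    have : (a.divisors * b.divisors : Finset ℕ)
        = (a.divisors ×ˢ b.divisors).image (fun x => x.1 * x.2) := by
      exact Finset.image_mul_product.symm
    rw [this]
    refine (Finset.sum_image_le_of_nonneg ?_).trans (le_of_eq ?_)
    · intros; positivity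
    refine Finset.sum_congr rfl fun x hx => ?_
    simp only [Finset.mem_product, Nat.mem_divisors] at hx
    rw [cardFactors_mul (ne_zero_of_dvd_ne_zero ha hx.1.1) (ne_zero_of_dvd_ne_zero hb hx.2.1),
      pow_add]

open ArithmeticFunction in
lemma conv_lower (B k Y Z : ℕ) :
    (∑ a ∈ copSet B Y, ((k : ℝ)) ^ (cardFactors a) / a) * (∑ b ∈ copSet B Z, (1 : ℝ) / b)
      ≤ ∑ n ∈ copSet B (Y * Z), ((k + 1 : ℕ) : ℝ) ^ (cardFactors n) / n := by
  classical
  rw [Finset.sum_mul_sum, ← Finset.sum_product']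
  have hmaps : ∀ x ∈ copSet B Y ×ˢ copSet B Z, x.1 * x.2 ∈ copSet B (Y * Z) := by
    intro x hx
    simp only [copSet, Finset.mem_product, Finset.mem_filter, Finset.mem_Icc] at hx ⊢
    exact ⟨⟨Nat.mul_pos hx.1.1.1 hx.2.1.1, Nat.mul_le_mul hx.1.1.2 hx.2.1.2⟩,
      Nat.Coprime.mul_left hx.1.2 hx.2.2⟩
  rw [← Finset.sum_fiberwise_of_maps_to hmaps]
  refine Finset.sum_le_sum fun n hn => ?_
  have hn0 : n ≠ 0 := by
    simp only [copSet, Finset.mem_filter, Finset.mem_Icc] at hn; omega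
  have h1 : ∀ x ∈ (copSet B Y ×ˢ copSet B Z).filter (fun x => x.1 * x.2 = n),
      (k : ℝ) ^ (cardFactors x.1) / (x.1 : ℝ) * (1 / (x.2 : ℝ))
        = (k : ℝ) ^ (cardFactors x.1) / n := by
    intro x hx
    rw [← (Finset.mem_filter.1 hx).2]
    push_cast
    rw [div_mul_div_comm, mul_one]
  rw [Finset.sum_congr rfl h1, ← Finset.sum_div]
  refine div_le_div_of_nonneg_right ?_ (Nat.cast_nonneg _)
  have h2 := sum_div_pow_cardFactors k n hn0
  have h3 : ((∑ a ∈ n.divisors, k ^ cardFactors a : ℕ) : ℝ) ≤ (((k + 1) ^ cardFactors n : ℕ) : ℝ) := by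
    exact_mod_cast h2
  push_cast at h3 ⊢
  refine le_trans ?_ h3
  have hinj : Set.InjOn Prod.fst
      (((copSet B Y ×ˢ copSet B Z).filter (fun x => x.1 * x.2 = n) : Finset (ℕ × ℕ)) :
        Set (ℕ × ℕ)) := by
    intro x hx y hy hxy
    simp only [Finset.coe_filter, Set.mem_ofPred_eq] at hx hy
    have : x.1 ≠ 0 := by rintro h; rw [h] at hx; simp at hx; exact hn0 hx.2.symm
    refine Prod.ext hxy ?_
    have h := hx.2.trans hy.2.symm
    rw [← hxy] at h
    exact Nat.eq_of_mul_eq_mul_left (Nat.pos_of_ne_zero this) h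
  rw [← Finset.sum_image (f := fun a : ℕ => (k : ℝ) ^ cardFactors a) hinj]
  refine Finset.sum_le_sum_of_subset_of_nonneg ?_ (fun _ _ _ => by positivity)
  intro a ha
  obtain ⟨x, hx, rfl⟩ := Finset.mem_image.1 ha
  rw [Nat.mem_divisors]
  exact ⟨⟨x.2, (Finset.mem_filter.1 hx).2.symm⟩, hn0⟩

lemma harm_lower (B W : ℕ) (hB : 0 < B) :
    Real.log (W + 1) / B ≤ ∑ b ∈ copSet B (B * W), (1 : ℝ) / b := by
  have h1 : Real.log ((W + 1 : ℕ) : ℝ) ≤ (harmonic W : ℝ) := log_add_one_le_harmonic W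
  push_cast at h1
  have hBr : (0 : ℝ) < B := by exact_mod_cast hB
  have hinj : Set.InjOn (fun j : ℕ => j * B + 1) (Finset.range W : Set ℕ) := by
    intro a _ b _ hab
    simp only [Nat.add_right_cancel_iff] at hab
    exact Nat.eq_of_mul_eq_mul_right hB hab
  calc Real.log (W + 1) / B ≤ (harmonic W : ℝ) / B := by gcongr
    _ = ∑ j ∈ Finset.range W, (1 : ℝ) / ((j + 1) * B) := by
        rw [harmonic]; push_cast
        rw [Finset.sum_div]
        refine Finset.sum_congr rfl fun j _ => ?_
        have : (j : ℝ) + 1 ≠ 0 := by positivity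
        field_simp
    _ ≤ ∑ j ∈ Finset.range W, (1 : ℝ) / ((j * B + 1 : ℕ) : ℝ) := by
        refine Finset.sum_le_sum fun j _ => ?_
        refine one_div_le_one_div_of_le (by positivity) ?_
        push_cast
        have : (1 : ℝ) ≤ B := by exact_mod_cast hB
        linarith
    _ = ∑ b ∈ (Finset.range W).image (fun j : ℕ => j * B + 1), (1 : ℝ) / b := by
        rw [Finset.sum_image hinj]
    _ ≤ _ := by
        refine Finset.sum_le_sum_of_subset_of_nonneg ?_ (fun _ _ _ => by positivity)
        intro b hb
        obtain ⟨j, hj, rfl⟩ := Finset.mem_image.1 hb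
        rw [Finset.mem_range] at hj
        simp only [copSet, Finset.mem_filter, Finset.mem_Icc]
        refine ⟨⟨by omega, ?_⟩, by simp⟩
        have : (j + 1) * B ≤ W * B := Nat.mul_le_mul_right _ hj
        nlinarith

open ArithmeticFunction in
lemma L_lower (B W : ℕ) (hB : 30 ∣ B) (hB0 : 0 < B) :
    (Real.log (W + 1) / B) ^ 3 ≤
      ∑ s ∈ (copSet B ((B * W) ^ 3)).image Nat.primeFactors, ∏ p ∈ s, (3 / ((p : ℝ) - 3)) := by
  classical
  have hh := harm_lower B W hB0
  have h0 : 0 ≤ Real.log (W + 1) / B :=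
    div_nonneg (Real.log_nonneg (by linarith [(Nat.cast_nonneg W : (0 : ℝ) ≤ W)])) (Nat.cast_nonneg _)
  set A := ∑ b ∈ copSet B (B * W), (1 : ℝ) / b with hA
  have c1 := conv_lower B 1 (B * W) (B * W)
  have c2 := conv_lower B 2 (B * W * (B * W)) (B * W)
  simp only [Nat.cast_one, one_pow, ← hA] at c1
  norm_num at c1 c2
  have e : B * W * (B * W) * (B * W) = (B * W) ^ 3 := by ring
  rw [e] at c2
  have hA0 : 0 ≤ A := h0.trans hh
  have hAi : ∑ b ∈ copSet B (B * W), (b : ℝ)⁻¹ = A := by simp [hA]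
  rw [hAi] at c2
  calc (Real.log (W + 1) / B) ^ 3 ≤ A ^ 3 := by gcongr
    _ = A * A * A := by ring
    _ ≤ _ := mul_le_mul_of_nonneg_right (by simpa [hA] using c1) hA0
    _ ≤ _ := c2
    _ = ∑ n ∈ copSet B ((B * W) ^ 3), wtF B n := by
        refine Finset.sum_congr rfl fun n hn => ?_
        rw [wtF_apply, if_pos (Finset.mem_filter.1 hn).2]
    _ = ∑ s ∈ (copSet B ((B * W) ^ 3)).image Nat.primeFactors,
          ∑ n ∈ (copSet B ((B * W) ^ 3)).filter (fun n => n.primeFactors = s), wtF B n := by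
        rw [Finset.sum_fiberwise_of_maps_to]
        intro n hn; exact Finset.mem_image_of_mem _ hn
    _ ≤ _ := by
        refine Finset.sum_le_sum fun s hs => ?_
        obtain ⟨m, hm, rfl⟩ := Finset.mem_image.1 hs
        refine wtF_fiber B hB _ _ ?_ ?_
        · intro p hp
          exact ⟨Nat.prime_of_mem_primeFactors hp, Nat.Coprime.coprime_dvd_left
            (Nat.dvd_of_mem_primeFactors hp) (Finset.mem_filter.1 hm).2⟩
        · intro n hn
          rw [Finset.mem_filter] at hn
          have := hn.1
          simp only [copSet, Finset.mem_filter, Finset.mem_Icc] at this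
          exact ⟨by omega, hn.2⟩

lemma pi3_bound (x : ℝ) (hx : 0 ≤ x) (a b W B : ℕ) (ha : 0 < a) (hab : a < b) (hW : 1 ≤ W)
    (hBdef : B = 30 * (a * b * (b - a))) :
    (pi3 x a b : ℝ) ≤ ((B : ℝ) * W) ^ 3 + b + 1 + ((x + 1) * (B / Real.log (W + 1)) ^ 3
      + ((B : ℝ) * W) ^ 12 * (B / Real.log (W + 1)) ^ 6) := by
  classical
  have hB30 : 30 ∣ B := ⟨_, hBdef⟩
  have hba : 0 < b - a := by omega
  have hb : 0 < b := by omega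
  have hB0 : 0 < B := by rw [hBdef]; positivity
  set Q := (B * W) ^ 3 with hQ
  set K := ⌊x⌋₊ + 1 with hK
  set D := (copSet B Q).image Nat.primeFactors with hD
  let Bad : ℕ → ℕ → Prop := fun p n => n % p = 0 ∨ n % p = a % p ∨ n % p = b % p
  let S : Finset ℕ := (Finset.range K).filter
    (fun q => q.Prime ∧ (q - a).Prime ∧ (q - b).Prime ∧ Q < q - b)
  -- properties of D
  have hDp : ∀ s ∈ D, (∏ p ∈ s, p) ≤ Q ∧ ∀ p ∈ s, p.Prime ∧ p ≤ Q ∧ p.Coprime B := by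
    intro s hs
    obtain ⟨n, hn, rfl⟩ := Finset.mem_image.1 hs
    simp only [copSet, Finset.mem_filter, Finset.mem_Icc] at hn
    refine ⟨(Nat.le_of_dvd (by omega) (Nat.prod_primeFactors_dvd n)).trans hn.1.2, ?_⟩
    intro p hp
    have hpd := Nat.dvd_of_mem_primeFactors hp
    exact ⟨Nat.prime_of_mem_primeFactors hp, (Nat.le_of_dvd (by omega) hpd).trans hn.1.2,
      Nat.Coprime.coprime_dvd_left hpd hn.2⟩
  have hmain := sieve_main Bad K D
    (by
      intro s hs p hp
      obtain ⟨hpp, hpQ, hpc⟩ := (hDp s hs).2 p hp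
      have hnd : ¬ p ∣ B := (Nat.Prime.coprime_iff_not_dvd hpp).1 hpc
      have hna : ¬ p ∣ a := fun h => hnd (by
        rw [hBdef]; exact Dvd.dvd.mul_left (Dvd.dvd.mul_right (Dvd.dvd.mul_right h _) _) _)
      have hnb : ¬ p ∣ b := fun h => hnd (by
        rw [hBdef]; exact Dvd.dvd.mul_left (Dvd.dvd.mul_right (Dvd.dvd.mul_left h _) _) _)
      have hnba : ¬ p ∣ b - a := fun h => hnd (by
        rw [hBdef]; exact Dvd.dvd.mul_left (Dvd.dvd.mul_left h _) _)
      refine ⟨hpp, seven_le_of_coprime hpp hB30 hpc, fun n => by simp [Bad], ?_⟩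
      rw [Set.ncard_eq_three]
      refine ⟨0, a % p, b % p, ?_, ?_, ?_, ?_⟩
      · intro h; exact hna (Nat.dvd_of_mod_eq_zero h.symm)
      · intro h; exact hnb (Nat.dvd_of_mod_eq_zero h.symm)
      · intro h
        exact hnba ((Nat.modEq_iff_dvd' hab.le).1 h)
      · ext n
        simp only [Finset.coe_range, Set.mem_Iio, Bad, Set.mem_sep_iff, Set.mem_insert_iff,
          Set.mem_singleton_iff]
        constructor
        · rintro ⟨h1, h2⟩
          rwa [Nat.mod_eq_of_lt h1] at h2
        · intro h
          have hlt : n < p := by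
            rcases h with h | h | h
            · rw [h]; exact hpp.pos
            · rw [h]; exact Nat.mod_lt _ hpp.pos
            · rw [h]; exact Nat.mod_lt _ hpp.pos
          refine ⟨hlt, ?_⟩
          rwa [Nat.mod_eq_of_lt hlt]) S
    (by
      intro q hq
      simp only [S, Finset.mem_filter, Finset.mem_range] at hq
      obtain ⟨hqK, hq1, hq2, hq3, hq4⟩ := hq
      refine ⟨hqK, fun s hs p hp hbad => ?_⟩
      obtain ⟨hpp, hpQ, -⟩ := (hDp s hs).2 p hp
      rcases hbad with h | h | h
      · have := (Nat.prime_dvd_prime_iff_eq hpp hq1).1 (Nat.dvd_of_mod_eq_zero h)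
        omega
      · have hle : a ≤ q := by omega
        have := (Nat.prime_dvd_prime_iff_eq hpp hq2).1 ((Nat.modEq_iff_dvd' hle).1 h.symm)
        omega
      · have hle : b ≤ q := by omega
        have := (Nat.prime_dvd_prime_iff_eq hpp hq3).1 ((Nat.modEq_iff_dvd' hle).1 h.symm)
        omega)
  have hlow := L_lower B W hB30 hB0
  rw [← hQ, ← hD] at hlow
  set L := ∑ s ∈ D, ∏ p ∈ s, (3 / ((p : ℝ) - 3)) with hL
  set lg := Real.log (W + 1) with hlg
  have hlgpos : 0 < lg := Real.log_pos (by
    have : (1 : ℝ) ≤ W := by exact_mod_cast hW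
    linarith)
  have hBr : (0 : ℝ) < B := by exact_mod_cast hB0
  have hlam : 0 < (lg / B) ^ 3 := by positivity
  have hLpos : 0 < L := hlam.trans_le hlow
  have hE : (∑ s ∈ D, ((∏ p ∈ s, p : ℕ) : ℝ)) ≤ (Q : ℝ) ^ 2 := by
    calc (∑ s ∈ D, ((∏ p ∈ s, p : ℕ) : ℝ)) ≤ ∑ s ∈ D, (Q : ℝ) :=
          Finset.sum_le_sum fun s hs => by exact_mod_cast (hDp s hs).1
      _ = D.card * (Q : ℝ) := by simp
      _ ≤ (Q : ℝ) * Q := by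
          refine mul_le_mul_of_nonneg_right ?_ (Nat.cast_nonneg _)
          have h1 : D.card ≤ (copSet B Q).card := Finset.card_image_le
          have h2 : (copSet B Q).card ≤ (Finset.Icc 1 Q).card := Finset.card_filter_le _ _
          rw [Nat.card_Icc] at h2
          exact_mod_cast (by omega : D.card ≤ Q)
      _ = (Q : ℝ) ^ 2 := by ring
  have hE0 : 0 ≤ (∑ s ∈ D, ((∏ p ∈ s, p : ℕ) : ℝ)) := Finset.sum_nonneg fun _ _ => Nat.cast_nonneg _
  have hS : (S.card : ℝ) ≤ K * (B / lg) ^ 3 + (Q : ℝ) ^ 4 * (B / lg) ^ 6 := by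
    have h1 : (S.card : ℝ) * L ^ 2 ≤ K * L + (Q : ℝ) ^ 4 := by
      refine hmain.trans ?_
      have : (∑ s ∈ D, ((∏ p ∈ s, p : ℕ) : ℝ)) ^ 2 ≤ ((Q : ℝ) ^ 2) ^ 2 := by gcongr
      nlinarith
    have h2 : (S.card : ℝ) ≤ K * (1 / L) + (Q : ℝ) ^ 4 * (1 / L) ^ 2 := by
      have : K * (1 / L) + (Q : ℝ) ^ 4 * (1 / L) ^ 2 = (K * L + (Q : ℝ) ^ 4) / L ^ 2 := by
        field_simp
      rw [this, le_div_iff₀ (by positivity)]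
      exact h1
    have h3 : 1 / L ≤ (B / lg) ^ 3 := by
      have : (B / lg) ^ 3 = 1 / (lg / B) ^ 3 := by field_simp
      rw [this]
      exact one_div_le_one_div_of_le hlam hlow
    have h4 : (0 : ℝ) ≤ 1 / L := by positivity
    refine h2.trans ?_
    have h5 : (1 / L) ^ 2 ≤ ((B / lg) ^ 3) ^ 2 := by gcongr
    have h6 : ((B / lg) ^ 3) ^ 2 = (B / lg) ^ 6 := by ring
    rw [h6] at h5
    gcongr
  have hsub : {q : ℕ | q.Prime ∧ (q : ℝ) ≤ x ∧ (q - a).Prime ∧ (q - b).Prime}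
      ⊆ ((Finset.range (Q + b + 1) ∪ S : Finset ℕ) : Set ℕ) := by
    rintro q ⟨h1, h2, h3, h4⟩
    simp only [Finset.coe_union, Set.mem_union, Finset.mem_coe, Finset.mem_range]
    by_cases h : Q < q - b
    · right
      simp only [S, Finset.mem_filter, Finset.mem_range]
      exact ⟨Nat.lt_succ_of_le (Nat.le_floor h2), h1, h3, h4, h⟩
    · left; omega
  have hcard : pi3 x a b ≤ (Q + b + 1) + S.card := by
    unfold pi3
    refine (Set.ncard_le_ncard hsub (Finset.finite_toSet _)).trans ?_
    rw [Set.ncard_coe_finset]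
    refine (Finset.card_union_le _ _).trans ?_
    rw [Finset.card_range]
  have hcard' : (pi3 x a b : ℝ) ≤ (Q + b + 1) + S.card := by exact_mod_cast hcard
  have hKx : (K : ℝ) ≤ x + 1 := by
    rw [hK]; push_cast
    linarith [Nat.floor_le hx]
  have hQr : (Q : ℝ) = ((B : ℝ) * W) ^ 3 := by rw [hQ]; push_cast; ring
  have hQr4 : (Q : ℝ) ^ 4 = ((B : ℝ) * W) ^ 12 := by rw [hQr]; ring
  rw [hQr4] at hS
  rw [hQr] at hcard'
  have : (K : ℝ) * (B / lg) ^ 3 ≤ (x + 1) * (B / lg) ^ 3 := by gcongr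
  linarith

/-- Primes `q ≤ x` whose predecessor prime is `q - d`. -/
def gapSet (x : ℝ) (d : ℕ) : Set ℕ :=
  {q : ℕ | q.Prime ∧ (q : ℝ) ≤ x ∧ (q - d).Prime ∧ ∀ r, q - d < r → r < q → ¬ r.Prime}

lemma primeSet_finite (x : ℝ) : {q : ℕ | (q : ℝ) ≤ x}.Finite := by
  refine (Set.finite_Iic ⌊x⌋₊).subset fun q hq => ?_
  exact Nat.le_floor hq

lemma gapSet_finite (x : ℝ) (d : ℕ) : (gapSet x d).Finite :=
  (primeSet_finite x).subset fun _ hq => hq.2.1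

lemma N_eq_gapSet (x : ℝ) (d : ℕ) (hd : 0 < d) : N x d = (gapSet x d).ncard := by
  have hinf := Nat.infinite_setOfPred_prime
  unfold N
  have himg : gapSet x d = nthPrime ''
      {n : ℕ | 2 ≤ n ∧ (nthPrime n : ℝ) ≤ x ∧ nthPrime n - nthPrime (n - 1) = d} := by
    ext q
    constructor
    · rintro ⟨h1, h2, h3, h4⟩
      have hlt : q - d < q := by have := h1.pos; omega
      have hc : Nat.count Nat.Prime (q - d) < Nat.count Nat.Prime q :=
        Nat.count_strict_mono h3 hlt
      have hn1 : nthPrime (Nat.count Nat.Prime q + 1) = q := by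
        simp [nthPrime, Nat.nth_count h1]
      refine ⟨Nat.count Nat.Prime q + 1, ⟨by omega, by rw [hn1]; exact h2, ?_⟩, hn1⟩
      rw [hn1]
      have hprev : nthPrime (Nat.count Nat.Prime q + 1 - 1) = q - d := by
        simp only [nthPrime, Nat.add_sub_cancel]
        set k := Nat.count Nat.Prime q - 1 with hk
        have hk1 : Nat.nth Nat.Prime k < q := by
          conv_rhs => rw [← Nat.nth_count h1]
          exact Nat.nth_strictMono hinf (by omega)
        have hk2 : q - d ≤ Nat.nth Nat.Prime k := by
          conv_lhs => rw [← Nat.nth_count h3]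
          exact (Nat.nth_strictMono hinf).monotone (by omega)
        have hk3 : (Nat.nth Nat.Prime k).Prime := Nat.nth_mem_of_infinite hinf k
        by_contra hne
        exact h4 _ (by omega) hk1 hk3
      rw [hprev]
      have := h3.pos
      omega
    · rintro ⟨n, ⟨h1, h2, h3⟩, rfl⟩
      have hp : ∀ m, (nthPrime m).Prime := fun m => Nat.nth_mem_of_infinite hinf _
      have hlt : nthPrime (n - 1) < nthPrime n := Nat.nth_strictMono hinf (by omega)
      have he : nthPrime n - d = nthPrime (n - 1) := by omega
      refine ⟨hp n, h2, by rw [he]; exact hp _, ?_⟩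
      intro r hr1 hr2 hr
      rw [he] at hr1
      have e1 : n - 1 - 1 < Nat.count Nat.Prime r := by
        rw [← Nat.nth_count hr] at hr1
        exact (Nat.nth_lt_nth hinf).1 hr1
      have e2 : Nat.count Nat.Prime r < n - 1 := by
        rw [← Nat.nth_count hr] at hr2
        exact (Nat.nth_lt_nth hinf).1 hr2
      omega
  rw [himg, Set.ncard_image_of_injOn]
  rintro a ⟨ha, -⟩ b ⟨hb, -⟩ hab
  have := (Nat.nth_strictMono hinf).injective hab
  omega

lemma N_le_pi2 (x : ℝ) (d : ℕ) (hd : 0 < d) : N x d ≤ pi2 x d := by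
  rw [N_eq_gapSet x d hd]
  refine Set.ncard_le_ncard (fun q hq => ⟨hq.1, hq.2.1, hq.2.2.1⟩) ?_
  exact (primeSet_finite x).subset fun _ hq => hq.2.1

lemma N_odd_le (x : ℝ) (d : ℕ) (hd : ¬ Even d) : N x d ≤ 1 := by
  have hd0 : 0 < d := by
    rcases Nat.eq_zero_or_pos d with h | h
    · subst h; simp at hd
    · exact h
  rw [N_eq_gapSet x d hd0]
  have : gapSet x d ⊆ {d + 2} := by
    rintro q ⟨h1, -, h3, -⟩
    have h4 := h3.two_le
    rw [Set.mem_singleton_iff]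
    rcases h1.eq_two_or_odd' with h | h
    · omega
    rcases h3.eq_two_or_odd' with h' | h'
    · omega
    exfalso
    apply hd
    have he := Nat.Odd.sub_odd h h'
    have : q - (q - d) = d := by omega
    rwa [this] at he
  exact (Set.ncard_le_ncard this).trans (by simp)

lemma N_mul_le (x : ℝ) (hx : 0 ≤ x) (d : ℕ) (hd : 0 < d) : (N x d : ℝ) * d ≤ x := by
  classical
  rw [N_eq_gapSet x d hd]
  have hfin := gapSet_finite x d
  set E := hfin.toFinset with hE
  have hmem : ∀ q, q ∈ E ↔ q ∈ gapSet x d := fun q => by simp [hE]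
  rw [Set.ncard_eq_toFinset_card _ hfin, ← hE]
  have hgt : ∀ q ∈ gapSet x d, d + 2 ≤ q := fun q hq => by have := hq.2.2.1.two_le; omega
  have hcard : (E ×ˢ Finset.range d).card ≤ (Finset.Icc 1 ⌊x⌋₊).card := by
    refine Finset.card_le_card_of_injOn (fun y => y.1 - y.2) ?_ ?_
    · rintro ⟨q, i⟩ hy
      simp only [Finset.coe_product, Set.mem_prod, Finset.mem_coe, Finset.mem_range, hmem] at hy
      have h1 := hgt q hy.1
      have h2 : q ≤ ⌊x⌋₊ := Nat.le_floor hy.1.2.1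
      simp only [Finset.coe_Icc, Set.mem_Icc]
      omega
    · rintro ⟨q, i⟩ hy ⟨q', i'⟩ hy' heq
      simp only [Finset.coe_product, Set.mem_prod, Finset.mem_coe, Finset.mem_range, hmem] at hy hy'
      simp only at heq
      have h1 := hgt q hy.1
      have h1' := hgt q' hy'.1
      have hq : q = q' := by
        rcases lt_trichotomy q q' with h | h | h
        · exact absurd hy.1.1 (hy'.1.2.2.2 q (by omega) h)
        · exact h
        · exact absurd hy'.1.1 (hy.1.2.2.2 q' (by omega) h)
      subst hq
      simp only [Prod.mk.injEq, true_and]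
      omega
  rw [Finset.card_product, Finset.card_range, Nat.card_Icc, Nat.add_sub_cancel] at hcard
  have : ((E.card * d : ℕ) : ℝ) ≤ (⌊x⌋₊ : ℝ) := by exact_mod_cast hcard
  push_cast at this
  exact this.trans (Nat.floor_le hx)

lemma pi2_le (x : ℝ) (d : ℕ) (hd : 0 < d) :
    pi2 x d ≤ N x d + ∑ a ∈ Finset.Ioo 0 d, pi3 x a d := by
  classical
  rw [N_eq_gapSet x d hd]
  have hsub : {q : ℕ | q.Prime ∧ (q : ℝ) ≤ x ∧ (q - d).Prime} ⊆
      gapSet x d ∪ ⋃ a ∈ Finset.Ioo 0 d,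
        {q : ℕ | q.Prime ∧ (q : ℝ) ≤ x ∧ (q - a).Prime ∧ (q - d).Prime} := by
    rintro q ⟨h1, h2, h3⟩
    by_cases h : ∀ r, q - d < r → r < q → ¬ r.Prime
    · left; exact ⟨h1, h2, h3, h⟩
    · right
      push Not at h
      obtain ⟨r, hr1, hr2, hr3⟩ := h
      simp only [Set.mem_iUnion]
      have h4 := h3.pos
      refine ⟨q - r, by rw [Finset.mem_Ioo]; omega, h1, h2, ?_, h3⟩
      have : q - (q - r) = r := by omega
      rw [this]; exact hr3
  have hfin : ∀ a, {q : ℕ | q.Prime ∧ (q : ℝ) ≤ x ∧ (q - a).Prime ∧ (q - d).Prime}.Finite :=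
    fun a => (primeSet_finite x).subset fun _ hq => hq.2.1
  unfold pi2
  refine (Set.ncard_le_ncard hsub ?_).trans ?_
  · exact (gapSet_finite x d).union (Set.Finite.biUnion (Finset.finite_toSet _) fun a _ => hfin a)
  refine (Set.ncard_union_le _ _).trans ?_
  gcongr
  exact Finset.set_ncard_biUnion_le _ _

lemma C2_pos : 0 < C2 := by
  have hq : ∀ q : {q : ℕ // q.Prime ∧ 2 < q}, (3 : ℝ) ≤ (q : ℕ) := fun q => by
    exact_mod_cast q.2.2
  have hs : Summable (fun q : {q : ℕ // q.Prime ∧ 2 < q} => -(1 / (((q : ℕ) : ℝ) - 1) ^ 2)) := by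
    apply Summable.neg
    have h1 : Summable (fun n : ℕ => 4 * (1 / (n : ℝ) ^ 2)) :=
      (Real.summable_one_div_nat_pow.2 (by norm_num)).mul_left 4
    refine Summable.of_nonneg_of_le (fun q => by positivity) (fun q => ?_)
      (h1.comp_injective (i := fun q : {q : ℕ // q.Prime ∧ 2 < q} => (q : ℕ))
        Subtype.val_injective)
    have h := hq q
    simp only [Function.comp]
    rw [mul_one_div, div_le_div_iff₀ (by nlinarith) (by nlinarith)]
    nlinarith
  have hlog := Real.summable_log_one_add_of_summable hs
  have hpos : ∀ q : {q : ℕ // q.Prime ∧ 2 < q}, 0 < 1 + -(1 / (((q : ℕ) : ℝ) - 1) ^ 2) := by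
    intro q
    have h := hq q
    have : 1 / (((q : ℕ) : ℝ) - 1) ^ 2 < 1 := by
      rw [div_lt_one (by nlinarith)]; nlinarith
    linarith
  have := Real.rexp_tsum_eq_tprod hpos hlog
  unfold C2
  simp only [sub_eq_add_neg (1 : ℝ)]
  rw [show (∏' q : {q : ℕ // q.Prime ∧ 2 < q}, (1 + -(1 / (((q : ℕ) : ℝ) - 1) ^ 2))) = _ from
    this.symm]
  exact Real.exp_pos _

/-- local factor of the singular series -/
noncomputable def rfac (q : ℕ) : ℝ := ((q : ℝ) - 1) / ((q : ℝ) - 2)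

lemma rfac_eq {q : ℕ} (hq : 2 < q) : rfac q = 1 + 1 / ((q : ℝ) - 2) := by
  have : (3 : ℝ) ≤ q := by exact_mod_cast hq
  have h : (q : ℝ) - 2 ≠ 0 := by intro h; linarith
  unfold rfac; field_simp; ring

lemma one_le_rfac {q : ℕ} (hq : 2 < q) : 1 ≤ rfac q := by
  have : (3 : ℝ) ≤ q := by exact_mod_cast hq
  rw [rfac_eq hq]
  have : 0 ≤ 1 / ((q : ℝ) - 2) := div_nonneg (by norm_num) (by linarith)
  linarith

lemma ss_even {d : ℕ} (hd : Even d) :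
    singularSeries d = 2 * C2 * ∏ q ∈ d.primeFactors.filter (fun q => 2 < q), rfac q := by
  unfold singularSeries; rw [if_pos hd]; rfl

lemma primorial_even {z : ℕ} (hz : 2 ≤ z) : Even (primorial z) := by
  rw [even_iff_two_dvd, Nat.prime_two.dvd_primorial_iff]; exact hz

lemma ss_ge {d : ℕ} (hd : Even d) : 2 * C2 ≤ singularSeries d := by
  rw [ss_even hd]
  have h1 : 1 ≤ ∏ q ∈ d.primeFactors.filter (fun q => 2 < q), rfac q := by
    refine Finset.prod_induction _ (fun y : ℝ => 1 ≤ y) (fun a b ha hb => ?_) le_rfl ?_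
    · nlinarith
    · intro q hq; exact one_le_rfac (Finset.mem_filter.1 hq).2
  have := C2_pos
  nlinarith

lemma prod_rfac_mono {s t : Finset ℕ} (h : s ⊆ t) (ht : ∀ q ∈ t, 2 < q) :
    ∏ q ∈ s, rfac q ≤ ∏ q ∈ t, rfac q := by
  rw [← Finset.prod_sdiff h]
  have h1 : 1 ≤ ∏ q ∈ t \ s, rfac q := by
    refine Finset.prod_induction _ (fun y : ℝ => 1 ≤ y) (fun a b ha hb => ?_) le_rfl ?_
    · nlinarith
    · intro q hq; exact one_le_rfac (ht q (Finset.mem_sdiff.1 hq).1)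
  have h2 : 0 ≤ ∏ q ∈ s, rfac q := Finset.prod_nonneg fun q hq =>
    zero_le_one.trans (one_le_rfac (ht q (h hq)))
  nlinarith

lemma ss_ratio (z p d : ℕ) (l : ℝ) (hz : 3 ≤ z) (hp : p.Prime) (hp2 : 2 < p) (hpz : p ≤ z)
    (hd : Even d) (hd0 : d ≠ 0) (hpd : ¬ p ∣ d) (hl : 1 ≤ l) (hdl : (d : ℝ) ≤ l ^ 2)
    (hlz : Real.log l ≤ 40 * (z + 1)) :
    singularSeries d ≤ (((p : ℝ) - 2) / (p - 1)) * Real.exp (240 / Real.log z) *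
      singularSeries (primorial z) := by
  classical
  rw [ss_even hd, ss_even (primorial_even (by omega))]
  set A := d.primeFactors.filter (fun q => 2 < q) with hA
  set U := (primorial z).primeFactors.filter (fun q => 2 < q) with hU
  have hzr : (3 : ℝ) ≤ z := by exact_mod_cast hz
  have hpr : (3 : ℝ) ≤ p := by exact_mod_cast hp2
  have hUgt : ∀ q ∈ U, 2 < q := fun q hq => (Finset.mem_filter.1 hq).2
  have hpU : p ∈ U := by
    rw [hU, Finset.mem_filter, Nat.mem_primeFactors]
    exact ⟨⟨hp, hp.dvd_primorial_iff.2 hpz, primorial_ne_zero z⟩, hp2⟩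
  have hsplit := Finset.prod_filter_mul_prod_filter_not A (fun q => q ≤ z) rfac
  have h1 : ∏ q ∈ A.filter (fun q => q ≤ z), rfac q ≤ ∏ q ∈ U.erase p, rfac q := by
    refine prod_rfac_mono ?_ (fun q hq => hUgt q (Finset.mem_of_mem_erase hq))
    intro q hq
    simp only [hA, Finset.mem_filter, Nat.mem_primeFactors] at hq
    rw [Finset.mem_erase, hU, Finset.mem_filter, Nat.mem_primeFactors]
    refine ⟨?_, ⟨hq.1.1.1, hq.1.1.1.dvd_primorial_iff.2 hq.2, primorial_ne_zero z⟩, hq.1.2⟩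
    rintro rfl
    exact hpd hq.1.1.2.1
  have h2 : ∏ q ∈ U.erase p, rfac q = (((p : ℝ) - 2) / (p - 1)) * ∏ q ∈ U, rfac q := by
    rw [← Finset.mul_prod_erase U rfac hpU, ← mul_assoc]
    have : (((p : ℝ) - 2) / (p - 1)) * rfac p = 1 := by
      unfold rfac
      have a1 : (p : ℝ) - 2 ≠ 0 := by intro h; linarith
      have a2 : (p : ℝ) - 1 ≠ 0 := by intro h; linarith
      field_simp
    rw [this, one_mul]
  set A2 := A.filter (fun q => ¬ q ≤ z) with hA2
  set k := A2.card with hk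
  have hlogz : 0 < Real.log z := Real.log_pos (by linarith)
  have h3 : (z : ℝ) ^ k ≤ l ^ 2 := by
    refine le_trans ?_ hdl
    have e1 : z ^ k ≤ ∏ q ∈ A2, q := by
      refine Finset.pow_card_le_prod _ _ _ ?_
      intro q hq
      have := (Finset.mem_filter.1 hq).2
      omega
    have e2 : (∏ q ∈ A2, q) ∣ d := by
      refine dvd_trans ?_ (Nat.prod_primeFactors_dvd d)
      refine Finset.prod_dvd_prod_of_subset _ _ _ ?_
      exact (Finset.filter_subset _ _).trans (Finset.filter_subset _ _)
    exact_mod_cast e1.trans (Nat.le_of_dvd (Nat.pos_of_ne_zero hd0) e2)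
  have h4 : (k : ℝ) * Real.log z ≤ 80 * (z + 1) := by
    have := Real.log_le_log (by positivity) h3
    rw [Real.log_pow, Real.log_pow] at this
    push_cast at this
    linarith
  have h5 : ∏ q ∈ A2, rfac q ≤ Real.exp (240 / Real.log z) := by
    have e1 : ∏ q ∈ A2, rfac q ≤ ∏ q ∈ A2, Real.exp (1 / ((z : ℝ) - 1)) := by
      refine Finset.prod_le_prod ?_ ?_
      · intro q hq
        have : 2 < q := (Finset.mem_filter.1 (Finset.mem_filter.1 hq).1).2
        exact zero_le_one.trans (one_le_rfac this)
      · intro q hq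
        have h2q : 2 < q := (Finset.mem_filter.1 (Finset.mem_filter.1 hq).1).2
        have hzq : z + 1 ≤ q := by
          have := (Finset.mem_filter.1 hq).2
          omega
        have hzq' : (z : ℝ) + 1 ≤ q := by exact_mod_cast hzq
        rw [rfac_eq h2q]
        have e : 1 / ((q : ℝ) - 2) ≤ 1 / ((z : ℝ) - 1) :=
          one_div_le_one_div_of_le (by linarith) (by linarith)
        have := Real.add_one_le_exp (1 / ((z : ℝ) - 1))
        linarith
    refine e1.trans ?_
    rw [Finset.prod_const, ← Real.exp_nat_mul]
    refine Real.exp_le_exp.2 ?_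
    rw [← hk, mul_one_div, div_le_div_iff₀ (by linarith) hlogz]
    linarith
  have hnn : 0 ≤ ∏ q ∈ U, rfac q := Finset.prod_nonneg fun q hq =>
    zero_le_one.trans (one_le_rfac (hUgt q hq))
  have hc0 : 0 ≤ ((p : ℝ) - 2) / (p - 1) := div_nonneg (by linarith) (by linarith)
  have h6 : ∏ q ∈ A, rfac q ≤
      ((((p : ℝ) - 2) / (p - 1)) * ∏ q ∈ U, rfac q) * Real.exp (240 / Real.log z) := by
    rw [← hsplit, ← h2]
    refine mul_le_mul h1 h5 ?_ ?_
    · refine Finset.prod_nonneg fun q hq => ?_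
      have : 2 < q := (Finset.mem_filter.1 (Finset.mem_filter.1 hq).1).2
      exact zero_le_one.trans (one_le_rfac this)
    · rw [h2]; positivity
  have := C2_pos
  calc 2 * C2 * ∏ q ∈ A, rfac q ≤ 2 * C2 * (((((p : ℝ) - 2) / (p - 1)) * ∏ q ∈ U, rfac q)
        * Real.exp (240 / Real.log z)) := by gcongr
    _ = _ := by ring

lemma ss_tendsto : Tendsto (fun z : ℕ => singularSeries (primorial z)) atTop atTop := by
  classical
  have h1 : Tendsto (fun n : ℕ => ∑ i ∈ Finset.range n,
      Set.indicator {p : ℕ | p.Prime} (fun n : ℕ => (1 : ℝ) / n) i) atTop atTop := by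
    refine (not_summable_iff_tendsto_nat_atTop_of_nonneg ?_).1 not_summable_one_div_on_primes
    intro n
    exact Set.indicator_nonneg (fun _ _ => by positivity) _
  have h2 : Tendsto (fun z : ℕ => 2 * C2 * (∑ i ∈ Finset.range (z + 1),
      Set.indicator {p : ℕ | p.Prime} (fun n : ℕ => (1 : ℝ) / n) i)) atTop atTop := by
    refine Tendsto.const_mul_atTop (by have := C2_pos; positivity) ?_
    exact h1.comp (tendsto_add_atTop_nat 1)
  refine tendsto_atTop_mono' _ ?_ h2
  filter_upwards [eventually_ge_atTop 2] with z hz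
  rw [ss_even (primorial_even hz)]
  have hC := C2_pos
  refine mul_le_mul_of_nonneg_left ?_ (by positivity)
  set U := (primorial z).primeFactors.filter (fun q => 2 < q) with hU
  have hUgt : ∀ q ∈ U, 2 < q := fun q hq => (Finset.mem_filter.1 hq).2
  have h3 : 1 + ∑ q ∈ U, (1 : ℝ) / q ≤ ∏ q ∈ U, rfac q := by
    clear_value U; clear hU
    induction U using Finset.induction_on with
    | empty => simp
    | insert a s ha ih =>
      have ih' := ih (fun q hq => hUgt q (Finset.mem_insert_of_mem hq))
      rw [Finset.sum_insert ha, Finset.prod_insert ha]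
      have ha2 : 2 < a := hUgt a (Finset.mem_insert_self _ _)
      have har : (3 : ℝ) ≤ a := by exact_mod_cast ha2
      rw [rfac_eq ha2]
      have e1 : 1 / (a : ℝ) ≤ 1 / ((a : ℝ) - 2) :=
        one_div_le_one_div_of_le (by linarith) (by linarith)
      have e2 : 0 ≤ ∑ q ∈ s, (1 : ℝ) / q := Finset.sum_nonneg fun _ _ => by positivity
      have e3 : 0 ≤ 1 / (a : ℝ) := by positivity
      nlinarith [mul_nonneg e3 e2]
  refine le_trans ?_ h3
  have h4 : ∑ i ∈ Finset.range (z + 1), Set.indicator {p : ℕ | p.Prime} (fun n : ℕ => (1 : ℝ) / n) i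
      ≤ ∑ i ∈ insert 2 U, (1 : ℝ) / i := by
    rw [Finset.sum_indicator_eq_sum_filter]
    refine Finset.sum_le_sum_of_subset_of_nonneg ?_ (fun _ _ _ => by positivity)
    intro q hq
    simp only [Finset.mem_filter, Finset.mem_range, Set.mem_ofPred_eq] at hq
    rw [Finset.mem_insert, hU, Finset.mem_filter, Nat.mem_primeFactors]
    rcases eq_or_lt_of_le hq.2.two_le with h | h
    · left; exact h.symm
    · right
      exact ⟨⟨hq.2, hq.2.dvd_primorial_iff.2 (by omega), primorial_ne_zero z⟩, h⟩
  refine h4.trans ?_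
  rw [Finset.sum_insert (fun h => absurd (hUgt 2 h) (by norm_num))]
  norm_num

lemma triple_sum (δ : ℝ) (hδ : 0 < δ) : ∀ᶠ x : ℝ in atTop, ∀ D : ℕ, 1 ≤ D →
    (D : ℝ) ^ 20 ≤ Real.log x →
    ∑ a ∈ Finset.Ioo 0 D, (pi3 x a D : ℝ) ≤ δ * (x / Real.log x ^ 2) := by
  set c1 : ℝ := 3 * 30 ^ 18 with hc1
  set c2 : ℝ := 2 * 720 ^ 3 with hc2
  have t1 : ∀ᶠ x : ℝ in atTop, Real.log x ^ 10 / (1 * x + 0) < (δ / (2 * c1)) ^ 2 :=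
    (Real.tendsto_pow_log_div_mul_add_atTop 1 0 10 one_ne_zero).eventually_lt_const (by positivity)
  have t2 : ∀ᶠ x : ℝ in atTop, (2 * c2 / δ) ^ 2 ≤ Real.log x :=
    Real.tendsto_log_atTop.eventually_ge_atTop _
  have t3 : ∀ᶠ x : ℝ in atTop, (24 : ℝ) ≤ Real.log x := Real.tendsto_log_atTop.eventually_ge_atTop _
  filter_upwards [t1, t2, t3, eventually_ge_atTop (1 : ℝ)] with x h1 h2 h3 hx D hD hDl
  set l := Real.log x with hl
  have hx0 : 0 < x := by linarith
  have hl0 : 0 < l := by linarith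
  have hDr : (1 : ℝ) ≤ D := by exact_mod_cast hD
  set w : ℝ := x ^ (1 / 24 : ℝ) with hw
  have hw1 : 1 ≤ w := Real.one_le_rpow hx (by norm_num)
  have hw24 : w ^ 12 = Real.sqrt x := by
    rw [hw, ← Real.rpow_natCast, ← Real.rpow_mul hx0.le, Real.sqrt_eq_rpow]
    norm_num
  set W := ⌊w⌋₊ with hW
  have hW1 : 1 ≤ W := Nat.le_floor (by simpa using hw1)
  have hWw : (W : ℝ) ≤ w := Nat.floor_le (by linarith)
  have hlogW : l / 24 ≤ Real.log (W + 1) := by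
    have e1 : Real.log w = l / 24 := by
      rw [hw, Real.log_rpow hx0]; ring
    rw [← e1]
    exact Real.log_le_log (by linarith) (Nat.lt_floor_add_one w).le
  have hlogW1 : 1 ≤ Real.log (W + 1) := by linarith
  set β : ℝ := 30 * (D : ℝ) ^ 3 with hβ
  have hβ1 : 1 ≤ β := by
    have : 1 ≤ (D : ℝ) ^ 3 := one_le_pow₀ hDr
    linarith
  have hDβ : (D : ℝ) ≤ β := by
    have : (D : ℝ) ≤ (D : ℝ) ^ 3 := le_self_pow₀ hDr (by norm_num)
    have : 0 ≤ (D : ℝ) ^ 3 := by positivity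
    linarith
  have hterm : ∀ a ∈ Finset.Ioo 0 D, (pi3 x a D : ℝ) ≤
      3 * (β ^ 18 * w ^ 12) + 2 * x * (24 * β / l) ^ 3 := by
    intro a ha
    rw [Finset.mem_Ioo] at ha
    set B := 30 * (a * D * (D - a)) with hB
    have hBβ : (B : ℝ) ≤ β := by
      have e : a * D * (D - a) ≤ D * D * D :=
        Nat.mul_le_mul (Nat.mul_le_mul_right _ ha.2.le) (Nat.sub_le _ _)
      have : ((30 * (a * D * (D - a)) : ℕ) : ℝ) ≤ ((30 * (D * D * D) : ℕ) : ℝ) := by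
        exact_mod_cast Nat.mul_le_mul_left _ e
      rw [hB, hβ]
      refine this.trans (le_of_eq ?_)
      push_cast; ring
    have hb := pi3_bound x hx0.le a D W B ha.1 ha.2 hW1 hB
    have hB0 : (0 : ℝ) ≤ B := Nat.cast_nonneg _
    have hW0 : (0 : ℝ) ≤ W := Nat.cast_nonneg _
    have hBW : (B : ℝ) * W ≤ β * w := mul_le_mul hBβ hWw hW0 (by linarith)
    have hβw : 1 ≤ β * w := by nlinarith
    have g1 : (B : ℝ) / Real.log (W + 1) ≤ β :=
      (div_le_self hB0 hlogW1).trans hBβ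
    have g2 : (B : ℝ) / Real.log (W + 1) ≤ 24 * β / l := by
      have : 24 * β / l = β / (l / 24) := by field_simp
      rw [this]
      exact div_le_div₀ (by linarith) hBβ (by positivity) hlogW
    have g0 : 0 ≤ (B : ℝ) / Real.log (W + 1) := div_nonneg hB0 (by linarith)
    have f1 : ((B : ℝ) * W) ^ 12 * (B / Real.log (W + 1)) ^ 6 ≤ β ^ 18 * w ^ 12 := by
      calc ((B : ℝ) * W) ^ 12 * (B / Real.log (W + 1)) ^ 6 ≤ (β * w) ^ 12 * β ^ 6 := by gcongr
        _ = _ := by ring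
    have f2 : ((B : ℝ) * W) ^ 3 ≤ β ^ 18 * w ^ 12 := by
      calc ((B : ℝ) * W) ^ 3 ≤ (β * w) ^ 3 := by gcongr
        _ ≤ (β * w) ^ 12 := pow_le_pow_right₀ hβw (by norm_num)
        _ ≤ (β * w) ^ 12 * β ^ 6 := le_mul_of_one_le_right (by positivity) (one_le_pow₀ hβ1)
        _ = _ := by ring
    have f3 : (D : ℝ) + 1 ≤ β ^ 18 * w ^ 12 := by
      have q1 : (D : ℝ) + 1 ≤ β := by
        have : (D : ℝ) ≤ (D : ℝ) ^ 3 := le_self_pow₀ hDr (by norm_num)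
        rw [hβ]; linarith
      calc (D : ℝ) + 1 ≤ β := q1
        _ ≤ β ^ 18 := le_self_pow₀ hβ1 (by norm_num)
        _ ≤ _ := le_mul_of_one_le_right (by positivity) (one_le_pow₀ hw1)
    have f4 : (x + 1) * (B / Real.log (W + 1)) ^ 3 ≤ 2 * x * (24 * β / l) ^ 3 := by
      have : x + 1 ≤ 2 * x := by linarith
      gcongr
    linarith
  have hD60 : (D : ℝ) ^ 55 ≤ l ^ 3 := by
    calc (D : ℝ) ^ 55 ≤ (D : ℝ) ^ 60 := pow_le_pow_right₀ hDr (by norm_num)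
      _ = ((D : ℝ) ^ 20) ^ 3 := by ring
      _ ≤ l ^ 3 := by gcongr
  have hD10 : (D : ℝ) ^ 10 ≤ Real.sqrt l := by
    apply Real.le_sqrt_of_sq_le
    calc ((D : ℝ) ^ 10) ^ 2 = (D : ℝ) ^ 20 := by ring
      _ ≤ l := hDl
  have hsum : ∑ a ∈ Finset.Ioo 0 D, (pi3 x a D : ℝ) ≤
      D * (3 * (β ^ 18 * w ^ 12) + 2 * x * (24 * β / l) ^ 3) := by
    refine (Finset.sum_le_sum hterm).trans ?_
    rw [Finset.sum_const, nsmul_eq_mul]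
    refine mul_le_mul_of_nonneg_right ?_ (by positivity)
    rw [Nat.card_Ioo]
    exact_mod_cast (by omega : D - 0 - 1 ≤ D)
  have hexp : (D : ℝ) * (3 * (β ^ 18 * w ^ 12) + 2 * x * (24 * β / l) ^ 3)
      = c1 * (D : ℝ) ^ 55 * Real.sqrt x + c2 * (D : ℝ) ^ 10 * (x / l ^ 3) := by
    rw [hw24, hβ, hc1, hc2, div_pow]
    field_simp
    ring
  rw [hexp] at hsum
  refine hsum.trans ?_
  have hc1p : 0 < c1 := by rw [hc1]; positivity
  have hc2p : 0 < c2 := by rw [hc2]; positivity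
  -- first piece
  have hsx : Real.sqrt x * Real.sqrt x = x := Real.mul_self_sqrt hx0.le
  have hsx0 : 0 < Real.sqrt x := Real.sqrt_pos.2 hx0
  have p1 : c1 * (D : ℝ) ^ 55 * Real.sqrt x ≤ δ / 2 * (x / l ^ 2) := by
    have e1 : l ^ 5 ≤ δ / (2 * c1) * Real.sqrt x := by
      rw [one_mul, add_zero, div_lt_iff₀ hx0] at h1
      refine (sq_le_sq₀ (by positivity) (by positivity)).1 ?_
      rw [mul_pow, Real.sq_sqrt hx0.le]
      calc (l ^ 5) ^ 2 = l ^ 10 := by ring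
        _ ≤ _ := h1.le
    have e2 : c1 * (D : ℝ) ^ 55 * Real.sqrt x ≤ c1 * l ^ 3 * Real.sqrt x := by gcongr
    refine e2.trans ?_
    rw [← mul_div_assoc, le_div_iff₀ (by positivity)]
    calc c1 * l ^ 3 * Real.sqrt x * l ^ 2 = c1 * Real.sqrt x * l ^ 5 := by ring
      _ ≤ c1 * Real.sqrt x * (δ / (2 * c1) * Real.sqrt x) := by gcongr
      _ = δ / 2 * (Real.sqrt x * Real.sqrt x) := by field_simp
      _ = _ := by rw [hsx]
  have p2 : c2 * (D : ℝ) ^ 10 * (x / l ^ 3) ≤ δ / 2 * (x / l ^ 2) := by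
    have e1 : 2 * c2 / δ ≤ Real.sqrt l := Real.le_sqrt_of_sq_le h2
    have hsl : Real.sqrt l * Real.sqrt l = l := Real.mul_self_sqrt hl0.le
    have hsl0 : 0 < Real.sqrt l := Real.sqrt_pos.2 hl0
    have e2 : c2 ≤ δ / 2 * Real.sqrt l := by
      rw [div_le_iff₀ hδ] at e1
      linarith
    have e3 : c2 * (D : ℝ) ^ 10 ≤ δ / 2 * l := by
      calc c2 * (D : ℝ) ^ 10 ≤ (δ / 2 * Real.sqrt l) * Real.sqrt l := by gcongr
        _ = δ / 2 * (Real.sqrt l * Real.sqrt l) := by ring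
        _ = _ := by rw [hsl]
    calc c2 * (D : ℝ) ^ 10 * (x / l ^ 3) ≤ δ / 2 * l * (x / l ^ 3) := by gcongr
      _ = _ := by field_simp
  linarith

set_option maxHeartbeats 1000000 in
/-- Assuming the Hardy–Littlewood prime pair conjecture uniformly for `2 ≤ d ≤ (log x)²`,
every fixed prime divides all sufficiently large jumping champions. -/
theorem fixed_prime_divides_jumping_champions
    (hHL : ∀ ε : ℝ, 0 < ε → ∃ x₀ : ℝ, ∀ x ≥ x₀, ∀ d : ℕ, Even d → 2 ≤ d →
      (d : ℝ) ≤ (Real.log x) ^ 2 →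
      |(pi2 x d : ℝ) - singularSeries d * x / (Real.log x) ^ 2| ≤
        ε * singularSeries d * x / (Real.log x) ^ 2) :
    ∀ p : ℕ, p.Prime → ∃ X : ℝ, ∀ x ≥ X, ∀ d : ℕ, JumpingChampion x d → p ∣ d := by
  intro p hp
  have hp2 : (2 : ℝ) ≤ p := by exact_mod_cast hp.two_le
  set c : ℝ := ((p : ℝ) - 2) / (p - 1) with hc
  set ε : ℝ := (1 - c) / 5 with hε
  have hc0 : 0 ≤ c := div_nonneg (by linarith) (by linarith)
  have hc1 : c < 1 := by rw [hc, div_lt_one (by linarith)]; linarith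
  have hε0 : 0 < ε := by rw [hε]; linarith
  have hε5 : ε ≤ 1 / 5 := by rw [hε]; linarith
  have hcε : c = 1 - 5 * ε := by rw [hε]; ring
  obtain ⟨x₀, hx₀⟩ := hHL ε hε0
  have hC := C2_pos
  have ev1 := triple_sum (ε * (2 * C2)) (by positivity)
  let z : ℝ → ℕ := fun x => ⌊Real.log (Real.log x) / 40⌋₊
  have hz : Tendsto z atTop atTop := by
    refine tendsto_nat_floor_atTop.comp ?_
    exact (Real.tendsto_log_atTop.comp Real.tendsto_log_atTop).atTop_div_const (by norm_num)
  have ev2 : ∀ᶠ x in atTop, 3 ≤ singularSeries (primorial (z x)) :=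
    (ss_tendsto.comp hz).eventually_ge_atTop 3
  have ev3 : ∀ᶠ x in atTop, max 3 p ≤ z x := hz.eventually_ge_atTop _
  have ev4 : ∀ᶠ x in atTop, Real.exp (240 / Real.log (z x)) < 1 + ε := by
    have t1 : Tendsto (fun x => 240 / Real.log (z x)) atTop (nhds 0) :=
      Tendsto.const_div_atTop
        (Real.tendsto_log_atTop.comp (tendsto_natCast_atTop_atTop.comp hz)) 240
    have t2 := (Real.continuous_exp.tendsto 0).comp t1
    rw [Real.exp_zero] at t2
    exact t2.eventually_lt_const (by linarith)
  have ev5 : ∀ᶠ x : ℝ in atTop, Real.log x ^ 2 / (1 * x + 0) < 1 :=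
    (Real.tendsto_pow_log_div_mul_add_atTop 1 0 2 one_ne_zero).eventually_lt_const one_pos
  have ev6 : ∀ᶠ x : ℝ in atTop, (1 : ℝ) ≤ Real.log x :=
    Real.tendsto_log_atTop.eventually_ge_atTop _
  have hall : ∀ᶠ x : ℝ in atTop, ∀ d : ℕ, JumpingChampion x d → p ∣ d := by
    filter_upwards [ev1, ev2, ev3, ev4, ev5, ev6, eventually_ge_atTop x₀,
      eventually_ge_atTop (1 : ℝ)] with x h1 h2 h3 h4 h5 h6 h7 hx1 d hd
    by_contra hpd
    have hxpos : 0 < x := by linarith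
    set l := Real.log x with hl
    set k := z x with hk
    have hk3 : 3 ≤ k := (le_max_left _ _).trans h3
    have hkp : p ≤ k := (le_max_right _ _).trans h3
    set P := primorial k with hP
    have hPeven : Even P := primorial_even (by omega)
    have hPpos : 0 < P := primorial_pos k
    have hP2 : 2 ≤ P := Nat.le_of_dvd hPpos hPeven.two_dvd
    have hlogl : 0 ≤ Real.log l := Real.log_nonneg h6
    have hkle : (k : ℝ) ≤ Real.log l / 40 := Nat.floor_le (by positivity)
    have hklt : Real.log l / 40 < k + 1 := Nat.lt_floor_add_one _
    have hPl : (P : ℝ) ^ 20 ≤ l := by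
      have e1 : (P : ℝ) ≤ 4 ^ k := by exact_mod_cast primorial_le_four_pow k
      have e2 : (4 : ℝ) ≤ Real.exp 2 := by
        have a1 : (2 : ℝ) ≤ Real.exp 1 := by linarith [Real.add_one_le_exp (1 : ℝ)]
        have a2 : Real.exp 2 = Real.exp 1 * Real.exp 1 := by rw [← Real.exp_add]; norm_num
        nlinarith
      calc (P : ℝ) ^ 20 ≤ ((4 : ℝ) ^ k) ^ 20 := by gcongr
        _ ≤ ((Real.exp 2) ^ k) ^ 20 := by gcongr
        _ = Real.exp (40 * k) := by
            rw [← Real.exp_nat_mul, ← Real.exp_nat_mul]; congr 1; push_cast; ring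
        _ ≤ Real.exp (Real.log l) := Real.exp_le_exp.2 (by linarith)
        _ = l := Real.exp_log (by linarith)
    have hP1r : (1 : ℝ) ≤ P := by exact_mod_cast hPpos
    have hPl2 : (P : ℝ) ≤ l ^ 2 := by
      calc (P : ℝ) ≤ (P : ℝ) ^ 20 := le_self_pow₀ hP1r (by norm_num)
        _ ≤ l := hPl
        _ ≤ l ^ 2 := le_self_pow₀ h6 (by norm_num)
    set T := x / l ^ 2 with hT
    have hl2 : 0 < l ^ 2 := by positivity
    have hT1 : 1 ≤ T := by
      rw [one_mul, add_zero, div_lt_one hxpos] at h5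
      rw [hT, le_div_iff₀ hl2]; linarith
    set s := singularSeries P with hs
    have hlow : (1 - 2 * ε) * s * T ≤ N x P := by
      have a1 := hx₀ x h7 P hPeven hP2 hPl2
      have a2 := (abs_le.1 a1).1
      have a3 := pi2_le x P hPpos
      have a4 : (pi2 x P : ℝ) ≤ N x P + ∑ a ∈ Finset.Ioo 0 P, (pi3 x a P : ℝ) := by
        exact_mod_cast a3
      have a5 := h1 P hPpos hPl
      have a6 : 2 * C2 ≤ s := ss_ge hPeven
      have e1 : singularSeries P * x / l ^ 2 = s * T := by rw [hT, hs]; ring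
      have e2 : ε * singularSeries P * x / l ^ 2 = ε * s * T := by rw [hT, hs]; ring
      rw [e1, e2] at a2
      have a7 : ε * (2 * C2) * T ≤ ε * s * T := by gcongr
      linarith
    have hNd : (N x P : ℝ) ≤ N x d := by exact_mod_cast hd.2 P
    have hbig : 9 / 5 * T ≤ (1 - 2 * ε) * s * T := by
      refine mul_le_mul_of_nonneg_right ?_ (by linarith)
      nlinarith
    by_cases hde : Even d
    · by_cases hdl : (d : ℝ) ≤ l ^ 2
      · have hd2 : 2 ≤ d := Nat.le_of_dvd hd.1 hde.two_dvd
        have hpgt : 2 < p := by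
          rcases eq_or_lt_of_le hp.two_le with h | h
          · exact absurd (h ▸ hde.two_dvd) hpd
          · exact h
        have a1 := (abs_le.1 (hx₀ x h7 d hde hd2 hdl)).2
        have e1 : singularSeries d * x / l ^ 2 = singularSeries d * T := by rw [hT]; ring
        have e2 : ε * singularSeries d * x / l ^ 2 = ε * singularSeries d * T := by rw [hT]; ring
        rw [e1, e2] at a1
        have a2 : (N x d : ℝ) ≤ pi2 x d := by exact_mod_cast N_le_pi2 x d hd.1
        have a3 := ss_ratio k p d l hk3 hp hpgt hkp hde hd.1.ne' hpd h6 hdl (by linarith)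
        rw [← hP, ← hs, ← hc] at a3
        have a4 : singularSeries d ≤ c * (1 + ε) * s := by
          refine a3.trans ?_
          have : 0 ≤ s := by linarith
          gcongr
        have a5 : (1 + ε) * singularSeries d * T ≤ (1 + ε) * (c * (1 + ε) * s) * T := by gcongr
        have a6 : (1 + ε) * (c * (1 + ε) * s) * T < (1 - 2 * ε) * s * T := by
          have b1 : (1 + ε) * (c * (1 + ε)) < 1 - 2 * ε := by
            rw [hcε]; nlinarith [mul_pos hε0 hε0, mul_pos (mul_pos hε0 hε0) hε0]
          have b2 : 0 < s * T := by
            have : 0 < s := by linarith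
            have : 0 < T := by linarith
            positivity
          calc (1 + ε) * (c * (1 + ε) * s) * T = (1 + ε) * (c * (1 + ε)) * (s * T) := by ring
            _ < (1 - 2 * ε) * (s * T) := mul_lt_mul_of_pos_right b1 b2
            _ = (1 - 2 * ε) * s * T := by ring
        linarith
      · have a1 := N_mul_le x hxpos.le d hd.1
        have a2 : (N x d : ℝ) ≤ T := by
          rw [hT, le_div_iff₀ hl2]
          refine le_trans ?_ a1
          exact mul_le_mul_of_nonneg_left (not_le.1 hdl).le (Nat.cast_nonneg _)
        linarith
    · have a1 : (N x d : ℝ) ≤ 1 := by exact_mod_cast N_odd_le x d hde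
      linarith
  exact eventually_atTop.1 hall
end

section
/- There exists a constant C > 0 such that for all integers d, d' with 1 ≤ d' < d and d ≥ 3, the triple singular series satisfies 𝔖({0, d', d}) ≤ C·(log log d)². -/
open Filter Real

namespace TSS

/-- `∑_{p ≤ n} f p`. -/
noncomputable def psum (f : ℕ → ℝ) (n : ℕ) : ℝ :=
  ∑ p ∈ (Finset.range (n + 1)).filter Nat.Prime, f p

lemma psum_succ (f : ℕ → ℝ) (n : ℕ) :
    psum f (n + 1) = psum f n + if (n + 1).Prime then f (n + 1) else 0 := by
  unfold psum
  rw [Finset.sum_filter, Finset.sum_filter, Finset.sum_range_succ]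

lemma sum_log_primeFactors_le (m : ℕ) (hm : 0 < m) :
    ∑ p ∈ m.primeFactors, Real.log p ≤ Real.log m := by
  rw [← Real.log_prod (fun p hp => by
    have := (Nat.prime_of_mem_primeFactors hp).pos
    positivity)]
  have h := Nat.le_of_dvd hm (Nat.prod_primeFactors_dvd m)
  have hpos : 0 < ∏ p ∈ m.primeFactors, p :=
    Finset.prod_pos fun p hp => (Nat.prime_of_mem_primeFactors hp).pos
  rw [← Nat.cast_prod]
  exact Real.log_le_log (by exact_mod_cast hpos) (by exact_mod_cast h)

lemma sum_div_log_le (n : ℕ) :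
    psum (fun p => ((n / p : ℕ) : ℝ) * Real.log p) n ≤ n * Real.log n := by
  have h1 : psum (fun p => ((n / p : ℕ) : ℝ) * Real.log p) n
      = ∑ m ∈ Finset.Ioc 0 n, ∑ p ∈ m.primeFactors, Real.log p := by
    unfold psum
    have : ∀ m ∈ Finset.Ioc 0 n, ∑ p ∈ m.primeFactors, Real.log p
        = ∑ p ∈ (Finset.range (n + 1)).filter Nat.Prime, if p ∣ m then Real.log p else 0 := by
      intro m hm
      rw [Finset.mem_Ioc] at hm
      rw [← Finset.sum_filter]
      apply Finset.sum_congr _ (fun _ _ => rfl)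
      ext p
      simp only [Nat.mem_primeFactors, Finset.mem_filter, Finset.mem_range]
      constructor
      · rintro ⟨hp, hd, h0⟩
        have := Nat.le_of_dvd hm.1 hd
        exact ⟨⟨by omega, hp⟩, hd⟩
      · rintro ⟨⟨_, hp⟩, hd⟩
        exact ⟨hp, hd, by omega⟩
    rw [Finset.sum_congr rfl this, Finset.sum_comm]
    apply Finset.sum_congr rfl
    intro p _
    rw [← Finset.sum_filter, Finset.sum_const, Nat.Ioc_filter_dvd_card_eq_div, nsmul_eq_mul]
  rw [h1]
  calc ∑ m ∈ Finset.Ioc 0 n, ∑ p ∈ m.primeFactors, Real.log p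
      ≤ ∑ m ∈ Finset.Ioc 0 n, Real.log n := by
        apply Finset.sum_le_sum
        intro m hm
        rw [Finset.mem_Ioc] at hm
        refine (sum_log_primeFactors_le m hm.1).trans ?_
        exact Real.log_le_log (by exact_mod_cast hm.1) (by exact_mod_cast hm.2)
    _ = n * Real.log n := by simp

lemma theta_le (n : ℕ) : psum (fun p => Real.log p) n ≤ Real.log 4 * n := by
  have h := Chebyshev.theta_le_log4_mul_x (x := (n : ℝ)) (by positivity)
  rw [Chebyshev.theta_eq_log_primorial, Nat.floor_natCast] at h
  unfold primorial at h
  rw [Nat.cast_prod, Real.log_prod (fun p hp => by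
    have := (Finset.mem_filter.mp hp).2.pos
    positivity)] at h
  exact h

lemma mertens1 (n : ℕ) (hn : 0 < n) :
    psum (fun p => Real.log p / p) n ≤ Real.log n + Real.log 4 := by
  have hn' : (0 : ℝ) < n := by exact_mod_cast hn
  have key : n * psum (fun p => Real.log p / p) n
      ≤ psum (fun p => ((n / p : ℕ) : ℝ) * Real.log p) n + psum (fun p => Real.log p) n := by
    unfold psum
    rw [Finset.mul_sum, ← Finset.sum_add_distrib]
    apply Finset.sum_le_sum
    intro p hp
    have hpp := (Finset.mem_filter.mp hp).2
    have hp0 : (0 : ℝ) < p := by exact_mod_cast hpp.pos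
    have hl : 0 ≤ Real.log p := Real.log_natCast_nonneg p
    have : (n : ℝ) / p ≤ ((n / p : ℕ) : ℝ) + 1 := by
      rw [div_le_iff₀ hp0]
      have := Nat.lt_div_mul_add (a := n) hpp.pos
      have h2 : n ≤ (n / p + 1) * p := by linarith [add_mul (n / p) 1 p]
      exact_mod_cast h2
    calc (n : ℝ) * (Real.log p / p) = (n : ℝ) / p * Real.log p := by ring
      _ ≤ (((n / p : ℕ) : ℝ) + 1) * Real.log p := by gcongr
      _ = _ := by ring
  have h1 := sum_div_log_le n
  have h2 := theta_le n
  have : n * psum (fun p => Real.log p / p) n ≤ n * (Real.log n + Real.log 4) := by linarith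
  exact le_of_mul_le_mul_left this hn'

lemma mertens2_aux (n : ℕ) (hn : 2 ≤ n) :
    psum (fun p => 1 / (p : ℝ)) n - psum (fun p => Real.log p / p) n / Real.log n
      ≤ Real.log (Real.log n) + (Real.log 4 / Real.log 2 - Real.log (Real.log 2))
        - Real.log 4 / Real.log n := by
  induction n, hn using Nat.le_induction with
  | base =>
    have h2 : Real.log 2 ≠ 0 := (Real.log_pos (by norm_num)).ne'
    have e : ∀ f : ℕ → ℝ, psum f 2 = f 2 := by
      intro f
      have : (Finset.range (2 + 1)).filter Nat.Prime = {2} := by decide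
      unfold psum
      rw [this, Finset.sum_singleton]
    rw [e, e]
    push_cast
    have : (1 : ℝ) / 2 - Real.log 2 / 2 / Real.log 2 = 0 := by
      field_simp
      ring
    rw [this]
    apply le_of_eq
    ring
  | succ n hn ih =>
    have hn1 : (1 : ℝ) < n := by exact_mod_cast hn
    have ha : 0 < Real.log n := Real.log_pos hn1
    have hb : 0 < Real.log ((n + 1 : ℕ) : ℝ) := Real.log_pos (by push_cast; linarith)
    have hab : Real.log n ≤ Real.log ((n + 1 : ℕ) : ℝ) :=
      Real.log_le_log (by linarith) (by push_cast; linarith)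
    have hS := mertens1 n (by omega)
    rw [psum_succ, psum_succ]
    set a := Real.log n
    set b := Real.log ((n + 1 : ℕ) : ℝ)
    set S := psum (fun p => Real.log p / p) n
    set T := psum (fun p => 1 / (p : ℝ)) n
    have e1 : (T + if (n + 1).Prime then 1 / ((n + 1 : ℕ) : ℝ) else 0)
        - (S + if (n + 1).Prime then b / ((n + 1 : ℕ) : ℝ) else 0) / b = T - S / b := by
      split_ifs
      · field_simp
        ring
      · simp
    rw [e1]
    have h3 : 1 - a / b ≤ Real.log b - Real.log a := by
      have := Real.one_sub_inv_le_log_of_pos (x := b / a) (by positivity)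
      rwa [inv_div, Real.log_div hb.ne' ha.ne'] at this
    have h4 : S * (1 / a - 1 / b) ≤ (a + Real.log 4) * (1 / a - 1 / b) := by
      apply mul_le_mul_of_nonneg_right hS
      have := one_div_le_one_div_of_le ha hab
      linarith
    have h5 : (a + Real.log 4) * (1 / a - 1 / b)
        = 1 - a / b + Real.log 4 / a - Real.log 4 / b := by
      field_simp
      ring
    have h6 : S * (1 / a - 1 / b) = S / a - S / b := by ring
    linarith

lemma psum_sub_one (n : ℕ) (hn : 1 ≤ n) :
    psum (fun p => 1 / ((p : ℝ) - 1)) n ≤ psum (fun p => 1 / (p : ℝ)) n + 1 - 1 / n := by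
  induction n, hn using Nat.le_induction with
  | base =>
    have e : ∀ f : ℕ → ℝ, psum f 1 = 0 := by
      intro f
      have : (Finset.range (1 + 1)).filter Nat.Prime = ∅ := by decide
      unfold psum
      rw [this, Finset.sum_empty]
    rw [e, e]
    norm_num
  | succ n hn ih =>
    rw [psum_succ, psum_succ]
    have hn0 : (0 : ℝ) < n := by exact_mod_cast hn
    have h := one_div_le_one_div_of_le hn0 (show (n : ℝ) ≤ n + 1 by linarith)
    push_cast
    split_ifs
    · rw [show (n : ℝ) + 1 - 1 = n by ring]
      linarith
    · linarith

/-- A constant in the bound for `∑ 1/(p-1)`. -/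
noncomputable def K : ℝ := Real.log 4 / Real.log 2 - Real.log (Real.log 2) + 2

lemma mertens2 (n : ℕ) (hn : 2 ≤ n) :
    psum (fun p => 1 / ((p : ℝ) - 1)) n ≤ Real.log (Real.log n) + K := by
  have hn1 : (1 : ℝ) < n := by exact_mod_cast hn
  have ha : 0 < Real.log n := Real.log_pos hn1
  have h1 := mertens2_aux n hn
  have h2 := psum_sub_one n (by omega)
  have h3 : psum (fun p => Real.log p / p) n / Real.log n ≤ 1 + Real.log 4 / Real.log n := by
    rw [div_le_iff₀ ha, add_mul, div_mul_cancel₀ _ ha.ne']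
    linarith [mertens1 n (by omega)]
  have h4 : (0 : ℝ) < 1 / n := by positivity
  unfold K
  linarith

/-- `H n = ∑_{p ∣ n} 1/(p-1)`. -/
noncomputable def H (n : ℕ) : ℝ := ∑ p ∈ n.primeFactors, 1 / ((p : ℝ) - 1)

lemma card_le (n : ℕ) (hn : 0 < n) :
    (n.primeFactors.card : ℝ) * Real.log 2 ≤ Real.log n := by
  refine le_trans ?_ (sum_log_primeFactors_le n hn)
  rw [← nsmul_eq_mul]
  apply Finset.card_nsmul_le_sum
  intro p hp
  exact Real.log_le_log (by norm_num)
    (by exact_mod_cast (Nat.prime_of_mem_primeFactors hp).two_le)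

lemma H_le (n : ℕ) (hn : 0 < n) :
    H n ≤ Real.log (Real.log (Real.log n + 2)) + (K + 1 / Real.log 2) := by
  have hl : 0 ≤ Real.log n := Real.log_natCast_nonneg n
  have hl2 : 0 < Real.log 2 := Real.log_pos (by norm_num)
  set m := ⌊Real.log n⌋₊ + 2 with hm
  have hm1 : Real.log n ≤ m := by
    have := (Nat.lt_floor_add_one (Real.log n)).le
    rw [hm]
    push_cast
    linarith
  have hm0 : (0 : ℝ) < m := by positivity
  have hm2 : (m : ℝ) ≤ Real.log n + 2 := by
    have := Nat.floor_le hl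
    rw [hm]
    push_cast
    linarith
  have hnn : ∀ p : ℕ, p.Prime → (0 : ℝ) ≤ 1 / ((p : ℝ) - 1) := by
    intro p hp
    have : (1 : ℝ) < p := by exact_mod_cast hp.one_lt
    apply one_div_nonneg.mpr
    linarith
  unfold H
  rw [← Finset.sum_filter_add_sum_filter_not n.primeFactors (fun p => p ≤ m)]
  have hA : ∑ p ∈ n.primeFactors.filter (fun p => p ≤ m), 1 / ((p : ℝ) - 1)
      ≤ Real.log (Real.log (Real.log n + 2)) + K := by
    calc _ ≤ psum (fun p => 1 / ((p : ℝ) - 1)) m := by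
          unfold psum
          apply Finset.sum_le_sum_of_subset_of_nonneg
          · intro p hp
            simp only [Finset.mem_filter, Nat.mem_primeFactors, Finset.mem_range] at hp ⊢
            exact ⟨by omega, hp.1.1⟩
          · intro p hp _
            exact hnn p (Finset.mem_filter.mp hp).2
      _ ≤ Real.log (Real.log m) + K := mertens2 m (by omega)
      _ ≤ _ := by
          have h1 : (1 : ℝ) < m := by
            have : 1 < m := by omega
            exact_mod_cast this
          have h2 := Real.log_pos h1
          gcongr
  have hB : ∑ p ∈ n.primeFactors.filter (fun p => ¬ p ≤ m), 1 / ((p : ℝ) - 1)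
      ≤ 1 / Real.log 2 := by
    calc _ ≤ ∑ p ∈ n.primeFactors.filter (fun p => ¬ p ≤ m), 1 / (m : ℝ) := by
          apply Finset.sum_le_sum
          intro p hp
          have h := (Finset.mem_filter.mp hp).2
          have : ((m + 1 : ℕ) : ℝ) ≤ p := by exact_mod_cast (by omega : m + 1 ≤ p)
          push_cast at this
          apply one_div_le_one_div_of_le hm0
          linarith
      _ ≤ ∑ p ∈ n.primeFactors, 1 / (m : ℝ) := by
          apply Finset.sum_le_sum_of_subset_of_nonneg (Finset.filter_subset _ _)
          intro _ _ _
          positivity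
      _ = (n.primeFactors.card : ℝ) / m := by
          rw [Finset.sum_const, nsmul_eq_mul]
          ring
      _ ≤ 1 / Real.log 2 := by
          rw [div_le_div_iff₀ hm0 hl2]
          linarith [card_le n hn]
  linarith

lemma exp_H_le (n : ℕ) (hn : 0 < n) :
    Real.exp (H n) ≤ Real.exp (K + 1 / Real.log 2) * Real.log (Real.log n + 2) := by
  have hl : 0 ≤ Real.log n := Real.log_natCast_nonneg n
  have := Real.exp_le_exp.mpr (H_le n hn)
  rwa [Real.exp_add, Real.exp_log (Real.log_pos (by linarith)), mul_comm] at this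

/-- local factor -/
noncomputable def e (n q : ℕ) : ℝ := if q ∣ n then Real.exp (1 / ((q : ℝ) - 1)) else 1

lemma prod_e_le (n : ℕ) (hn : 0 < n) (s : Finset Nat.Primes) :
    ∏ q ∈ s, e n q ≤ Real.exp (H n) := by
  unfold e H
  rw [← Finset.prod_filter, ← Real.exp_sum, Real.exp_le_exp]
  rw [← Finset.sum_image (s := s.filter (fun q : Nat.Primes => (q : ℕ) ∣ n))
    (g := fun q : Nat.Primes => (q : ℕ)) (f := fun p : ℕ => 1 / ((p : ℝ) - 1))
    (fun a _ b _ h => Subtype.ext h)]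
  apply Finset.sum_le_sum_of_subset_of_nonneg
  · intro p hp
    obtain ⟨q, hq, rfl⟩ := Finset.mem_image.mp hp
    exact Nat.mem_primeFactors.mpr ⟨q.2, (Finset.mem_filter.mp hq).2, hn.ne'⟩
  · intro p hp _
    have : (1 : ℝ) < p := by exact_mod_cast (Nat.prime_of_mem_primeFactors hp).one_lt
    apply one_div_nonneg.mpr
    linarith

lemma one_le_e (n q : ℕ) (hq : q.Prime) : 1 ≤ e n q := by
  unfold e
  split_ifs
  · have : (1 : ℝ) < q := by exact_mod_cast hq.one_lt
    apply Real.one_le_exp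
    apply one_div_nonneg.mpr
    linarith
  · exact le_rfl

lemma nu_le_three (d' d q : ℕ) : nu d' d q ≤ 3 := Finset.card_le_three

lemma nu_pos (d' d q : ℕ) : 1 ≤ nu d' d q := Finset.card_pos.mpr ⟨0, by simp⟩

lemma nu_le (d' d q : ℕ) (hq : q.Prime) : nu d' d q ≤ q := by
  haveI : Fact q.Prime := ⟨hq⟩
  have := Finset.card_le_univ ({(0 : ZMod q), (d' : ZMod q), (d : ZMod q)} : Finset (ZMod q))
  rwa [ZMod.card] at this

lemma dvd_of_nu_one (d' d q : ℕ) (h : nu d' d q = 1) : q ∣ d := by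
  unfold nu at h
  rw [Finset.card_eq_one] at h
  obtain ⟨a, ha⟩ := h
  have h0 : (0 : ZMod q) ∈ ({a} : Finset (ZMod q)) := by rw [← ha]; simp
  have h1 : (d : ZMod q) ∈ ({a} : Finset (ZMod q)) := by rw [← ha]; simp
  rw [Finset.mem_singleton] at h0 h1
  rw [← ZMod.natCast_eq_zero_iff, h1, h0]

lemma dvd_of_nu_ne_three (d' d q : ℕ) (hd : d' < d) (h : nu d' d q ≠ 3) :
    q ∣ d * d' * (d - d') := by
  by_contra hc
  apply h
  unfold nu
  rw [Finset.card_eq_three]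
  refine ⟨0, d', d, ?_, ?_, ?_, rfl⟩
  · intro h1
    have := (ZMod.natCast_eq_zero_iff d' q).mp h1.symm
    exact hc (Dvd.dvd.mul_right (Dvd.dvd.mul_left this _) _)
  · intro h1
    have := (ZMod.natCast_eq_zero_iff d q).mp h1.symm
    exact hc (Dvd.dvd.mul_right (Dvd.dvd.mul_right this _) _)
  · intro h1
    have := (ZMod.natCast_eq_zero_iff (d - d') q).mp (by
      rw [Nat.cast_sub hd.le, h1, sub_self])
    exact hc (Dvd.dvd.mul_left this _)

lemma factor_nonneg (d' d q : ℕ) (hq : q.Prime) :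
    0 ≤ ((1 - 1 / (q : ℝ)) ^ 3)⁻¹ * (1 - (nu d' d q : ℝ) / (q : ℝ)) := by
  have h1 : (1 : ℝ) < q := by exact_mod_cast hq.one_lt
  have h2 : (nu d' d q : ℝ) ≤ q := by exact_mod_cast nu_le d' d q hq
  have h3 : 1 / (q : ℝ) ≤ 1 := by rw [div_le_one (by linarith)]; exact h1.le
  have h4 : (nu d' d q : ℝ) / (q : ℝ) ≤ 1 := by rw [div_le_one (by linarith)]; exact h2
  apply mul_nonneg
  · apply inv_nonneg.mpr
    apply pow_nonneg
    linarith
  · linarith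

lemma factor_le (d' d q : ℕ) (hd : d' < d) (hq : q.Prime) :
    ((1 - 1 / (q : ℝ)) ^ 3)⁻¹ * (1 - (nu d' d q : ℝ) / (q : ℝ))
      ≤ e (d * d' * (d - d')) q * e d q := by
  have h1 : (1 : ℝ) < q := by exact_mod_cast hq.one_lt
  have hx : 0 < 1 - 1 / (q : ℝ) := by
    rw [sub_pos, div_lt_one (by linarith)]
    exact h1
  have hE : (1 - 1 / (q : ℝ))⁻¹ ≤ Real.exp (1 / ((q : ℝ) - 1)) := by
    have h := Real.add_one_le_exp (1 / ((q : ℝ) - 1))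
    have h2 : (1 - 1 / (q : ℝ))⁻¹ = 1 / ((q : ℝ) - 1) + 1 := by
      have : (q : ℝ) - 1 ≠ 0 := by linarith
      have : (q : ℝ) ≠ 0 := by linarith
      have := hx.ne'
      field_simp
      ring
    linarith
  have hB : 1 - (nu d' d q : ℝ) / (q : ℝ) ≤ (1 - 1 / (q : ℝ)) ^ (nu d' d q) := by
    have h3 : 1 / (q : ℝ) ≤ 1 := by linarith
    have := one_add_mul_le_pow (a := - (1 / (q : ℝ))) (by linarith) (nu d' d q)
    calc _ = 1 + (nu d' d q : ℝ) * -(1 / (q : ℝ)) := by ring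
      _ ≤ _ := this
      _ = _ := by ring
  have hle : ((1 - 1 / (q : ℝ)) ^ 3)⁻¹ * (1 - (nu d' d q : ℝ) / (q : ℝ))
      ≤ ((1 - 1 / (q : ℝ)) ^ 3)⁻¹ * (1 - 1 / (q : ℝ)) ^ (nu d' d q) := by
    gcongr
  refine hle.trans ?_
  have hi : 0 < (1 - 1 / (q : ℝ))⁻¹ := inv_pos.mpr hx
  have hn3 := nu_le_three d' d q
  have hn1 := nu_pos d' d q
  have ho1 := one_le_e d q hq
  have hcase : nu d' d q = 1 ∨ nu d' d q = 2 ∨ nu d' d q = 3 := by omega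
  rcases hcase with hc | hc | hc
  · have e1 : e (d * d' * (d - d')) q = Real.exp (1 / ((q : ℝ) - 1)) :=
      if_pos (dvd_of_nu_ne_three d' d q hd (by omega))
    have e2 : e d q = Real.exp (1 / ((q : ℝ) - 1)) := if_pos (dvd_of_nu_one d' d q hc)
    rw [e1, e2, hc]
    calc _ = (1 - 1 / (q : ℝ))⁻¹ * (1 - 1 / (q : ℝ))⁻¹ := by
          have := hx.ne'
          generalize 1 - 1 / (q : ℝ) = x at *
          field_simp
      _ ≤ _ := by gcongr
  · have e1 : e (d * d' * (d - d')) q = Real.exp (1 / ((q : ℝ) - 1)) :=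
      if_pos (dvd_of_nu_ne_three d' d q hd (by omega))
    rw [e1, hc]
    calc _ = (1 - 1 / (q : ℝ))⁻¹ * 1 := by
          have := hx.ne'
          generalize 1 - 1 / (q : ℝ) = x at *
          field_simp
      _ ≤ _ := by gcongr
  · rw [hc, inv_mul_cancel₀ (pow_pos hx 3).ne']
    exact one_le_mul_of_one_le_of_one_le (one_le_e _ q hq) ho1

lemma H_nonneg (n : ℕ) : 0 ≤ H n := by
  unfold H
  apply Finset.sum_nonneg
  intro p hp
  have : (1 : ℝ) < p := by exact_mod_cast (Nat.prime_of_mem_primeFactors hp).one_lt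
  apply one_div_nonneg.mpr
  linarith

lemma series_le (d' d : ℕ) (h1 : 1 ≤ d') (hd : d' < d) :
    tripleSingularSeries d' d ≤ Real.exp (H (d * d' * (d - d'))) * Real.exp (H d) := by
  have hD : 0 < d * d' * (d - d') :=
    Nat.mul_pos (Nat.mul_pos (by omega) (by omega)) (by omega)
  unfold tripleSingularSeries
  apply tprod_le_of_prod_le'
  · exact one_le_mul_of_one_le_of_one_le (Real.one_le_exp (H_nonneg _))
      (Real.one_le_exp (H_nonneg _))
  · intro s
    calc _ ≤ ∏ q ∈ s, (e (d * d' * (d - d')) q * e d q) :=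
          Finset.prod_le_prod (fun q _ => factor_nonneg d' d q q.2)
            (fun q _ => factor_le d' d q hd q.2)
      _ = (∏ q ∈ s, e (d * d' * (d - d')) q) * ∏ q ∈ s, e d q := Finset.prod_mul_distrib
      _ ≤ _ := by
        apply mul_le_mul (prod_e_le _ hD s) (prod_e_le d (by omega) s) _ (Real.exp_pos _).le
        exact Finset.prod_nonneg fun q _ => zero_le_one.trans (one_le_e d q q.2)

end TSS

/-- Sharp bound for the triple singular series: `𝔖({0,d',d}) ≪ (log log d)²`. -/
theorem tripleSingularSeries_le_loglog_sq :
    ∃ C : ℝ, 0 < C ∧ ∀ d' d : ℕ, 1 ≤ d' → d' < d → 3 ≤ d →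
      tripleSingularSeries d' d ≤ C * (Real.log (Real.log d)) ^ 2 := by
  set A := Real.exp (TSS.K + 1 / Real.log 2) with hA
  have hA0 : 0 < A := Real.exp_pos _
  have hl3 : 1 < Real.log 3 := by
    rw [Real.lt_log_iff_exp_lt (by norm_num)]
    linarith [Real.exp_one_lt_d9]
  have hll3 : 0 < Real.log (Real.log 3) := Real.log_pos hl3
  have hl5 : 0 < Real.log 5 := Real.log_pos (by norm_num)
  set B := 1 + Real.log 5 / Real.log (Real.log 3) with hB
  have hB0 : 0 < B := by positivity
  refine ⟨(A * B) ^ 2, by positivity, ?_⟩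
  intro d' d h1 hd h3
  have hd3 : (3 : ℝ) ≤ d := by exact_mod_cast h3
  have hL : Real.log 3 ≤ Real.log d := Real.log_le_log (by norm_num) hd3
  have hLL : Real.log (Real.log 3) ≤ Real.log (Real.log d) :=
    Real.log_le_log (by linarith) hL
  have gen : ∀ n : ℕ, 0 < n → n ≤ d ^ 3 →
      Real.exp (TSS.H n) ≤ A * B * Real.log (Real.log d) := by
    intro n hn hnd
    have hn0 : (0 : ℝ) < n := by exact_mod_cast hn
    have h := TSS.exp_H_le n hn
    have hlog : Real.log n ≤ 3 * Real.log d := by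
      have : Real.log n ≤ Real.log ((d : ℝ) ^ 3) :=
        Real.log_le_log hn0 (by exact_mod_cast hnd)
      rwa [Real.log_pow] at this
    have hnn : 0 ≤ Real.log n := Real.log_natCast_nonneg n
    have h5 : Real.log (Real.log n + 2) ≤ B * Real.log (Real.log d) := by
      calc _ ≤ Real.log (5 * Real.log d) := Real.log_le_log (by linarith) (by linarith)
        _ = Real.log 5 + Real.log (Real.log d) :=
            Real.log_mul (by norm_num) (by linarith)
        _ ≤ _ := by
            have : Real.log 5 = Real.log 5 / Real.log (Real.log 3) * Real.log (Real.log 3) := by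
              field_simp
            have h6 : Real.log 5 / Real.log (Real.log 3) * Real.log (Real.log 3)
              ≤ Real.log 5 / Real.log (Real.log 3) * Real.log (Real.log d) := by gcongr
            rw [hB, add_mul]
            linarith
    calc _ ≤ A * Real.log (Real.log n + 2) := h
      _ ≤ A * (B * Real.log (Real.log d)) := by gcongr
      _ = _ := by ring
  have hD : 0 < d * d' * (d - d') :=
    Nat.mul_pos (Nat.mul_pos (by omega) (by omega)) (by omega)
  have g1 := gen (d * d' * (d - d')) hD (by
    calc d * d' * (d - d') ≤ d * d * d :=
          Nat.mul_le_mul (Nat.mul_le_mul le_rfl hd.le) (Nat.sub_le _ _)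
      _ = d ^ 3 := by ring)
  have g2 := gen d (by omega) (Nat.le_self_pow (by norm_num) d)
  refine (TSS.series_le d' d h1 hd).trans ?_
  calc _ ≤ (A * B * Real.log (Real.log d)) * (A * B * Real.log (Real.log d)) :=
        mul_le_mul g1 g2 (Real.exp_pos _).le ((Real.exp_pos _).le.trans g1)
    _ = _ := by ring
end
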